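/- arXiv:2405.02729 — 2 statements merged into one kernel-verified Lean document; each statement's English description precedes it below -/
import Mathlib

section
/- In the setting of Ulam's method for the approximating maps τ_n, for n ≥ N with a_n + D₁ < 1 and k ≥ 1 let f_{n,k} be a normalized fixed point of the Ulam operator P^{(k)}_{τ_n}. Then the family {f_{n,k}} is uniformly bounded in L^∞(I,λ). Moreover, if (n_j, k_j)_{j≥1} with n_j → ∞ and k_j → ∞ is such that f_{n_j,k_j} converges weakly in L¹ to some f (meaning ∫₀¹ g·f_{n_j,k_j} dλ → ∫₀¹ g·f dλ for every g ∈ L^∞(I,λ)), then f_{n_j,k_j} → f in L¹-norm and λ-almost everywhere, and f is a fixed point of the Frobenius–Perron operator P_τ of τ, i.e., the measure f·λ is τ-invariant. -/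
open MeasureTheory Set Filter

/-- Lebesgue measure on the unit interval `I = [0,1]`. -/
noncomputable def lam : MeasureTheory.Measure ℝ := MeasureTheory.volume.restrict (Set.Icc 0 1)

/-- A piecewise convex map `τ` on `[0,1]` with countably many branches, whose partition
points form a strictly decreasing sequence `1 = a 0 > a 1 > ⋯` tending to `0`; on each
`[a (m+1), a m)` the map is continuous, convex and differentiable, vanishes at the left
endpoint, and has right derivative `d (m+1) = τ'(a (m+1)) > 0` there; there is `N ≥ 1`
with `D₁ = ∑_{m=N+1}^∞ 1/τ'(a m) < 1` and `C = ∑_{m=1}^∞ 1/τ'(a m) < ∞`. -/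
structure PCApprox (τ : ℝ → ℝ) (a d : ℕ → ℝ) (N : ℕ) : Prop where
  mapsTo : Set.MapsTo τ (Set.Icc 0 1) (Set.Icc 0 1)
  a_zero : a 0 = 1
  a_anti : StrictAnti a
  a_lim : Filter.Tendsto a Filter.atTop (nhds 0)
  cont : ∀ m : ℕ, ContinuousOn τ (Set.Ico (a (m+1)) (a m))
  conv : ∀ m : ℕ, ConvexOn ℝ (Set.Ico (a (m+1)) (a m)) τ
  diff : ∀ m : ℕ, ∀ x ∈ Set.Ico (a (m+1)) (a m),
    DifferentiableWithinAt ℝ τ (Set.Ico (a (m+1)) (a m)) x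
  map_a : ∀ m : ℕ, τ (a (m+1)) = 0
  deriv_a : ∀ m : ℕ, HasDerivWithinAt τ (d (m+1)) (Set.Ici (a (m+1))) (a (m+1))
  d_pos : ∀ m : ℕ, 0 < d (m+1)
  N_pos : 1 ≤ N
  sum_d : Summable fun m => 1 / d (m+1)
  D₁_lt : (∑' m : ℕ, 1 / d (m + N + 1)) < 1

/-- `D₁ = ∑_{m=N+1}^∞ 1/τ'(a m)`. -/
noncomputable def D₁ (d : ℕ → ℝ) (N : ℕ) : ℝ := ∑' m : ℕ, 1 / d (m + N + 1)

/-- `C = ∑_{m=1}^∞ 1/τ'(a m)`. -/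
noncomputable def Cconst (d : ℕ → ℝ) : ℝ := ∑' m : ℕ, 1 / d (m + 1)

/-- `D = ∑_{m=1}^N 1/(a m · τ'(a m))`. -/
noncomputable def Dconst (a d : ℕ → ℝ) (N : ℕ) : ℝ :=
  ∑ m ∈ Finset.range N, 1 / (a (m+1) * d (m+1))

/-- The approximating map `τ_n`: `τ_n x = x / a n` for `x < a n`, and `τ_n x = τ x`
for `a n ≤ x`. -/
noncomputable def tauN (τ : ℝ → ℝ) (a : ℕ → ℝ) (n : ℕ) : ℝ → ℝ :=
  fun x => if x < a n then x / a n else τ x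

/-- Essential supremum (with respect to `λ` on `[0,1]`) of a real function, valued in `ℝ≥0∞`. -/
noncomputable def esssup (f : ℝ → ℝ) : ENNReal := essSup (fun x => ENNReal.ofReal (f x)) lam

/-- The `i`-th Ulam interval `J_{i+1} = [i/k, (i+1)/k)` of the uniform partition of `[0,1]`
into `k` subintervals. -/
noncomputable def Jint (k i : ℕ) : Set ℝ := Set.Ico ((i : ℝ) / k) (((i : ℝ) + 1) / k)

/-- The Ulam projection `Q^{(k)} f = ∑_{i=1}^k (k ∫_{J_i} f dλ) · χ_{J_i}` onto functions
constant on the elements of the uniform partition into `k` subintervals. -/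
noncomputable def Qk (k : ℕ) (f : ℝ → ℝ) : ℝ → ℝ := fun x =>
  ∑ i ∈ Finset.range k,
    Set.indicator (Jint k i) (fun _ => (k : ℝ) * ∫ y in Jint k i, f y ∂lam) x

/-- `fnk` is a normalized fixed point of the Ulam operator `P^{(k)}_σ = Q^{(k)} ∘ P_σ`:
it is constant on each `J_i`, non-negative, of integral `1`, and `Q^{(k)} (P_σ fnk) = fnk`
`λ`-a.e. (where the Frobenius–Perron image `P_σ fnk` is realized by a version `g`). -/
def IsUlamFixed (σ : ℝ → ℝ) (k : ℕ) (fnk : ℝ → ℝ) : Prop :=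
  MeasureTheory.Integrable fnk lam ∧
  (∀ i : ℕ, i < k → ∀ x ∈ Jint k i, ∀ y ∈ Jint k i, fnk x = fnk y) ∧
  (∀ x ∈ Set.Icc (0:ℝ) 1, 0 ≤ fnk x) ∧
  (∫ x, fnk x ∂lam) = 1 ∧
  ∃ g : ℝ → ℝ, MeasureTheory.Integrable g lam ∧
    (∀ A : Set ℝ, MeasurableSet A → A ⊆ Set.Icc (0:ℝ) 1 →
      ∫ x in A, g x ∂lam = ∫ x in σ ⁻¹' A, fnk x ∂lam) ∧
    Qk k g =ᵐ[lam] fnk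

/-!
The Ulam projection and, since the branches are convex and vanish at their left endpoints, the
Frobenius–Perron operator of `τ_n` map decreasing functions to decreasing functions. In the
coordinates of step functions with respect to the indicators of `[0, (j + 1) / k)`, the Ulam
operator is therefore a nonnegative matrix, and the masses `(j + 1) / k` form a superharmonic
weight for it because integrals do not increase. So the negative part of the coordinates of a
fixed point, being subinvariant, is invariant. It vanishes at the last coordinate, where the fixed
point takes its nonnegative last value, and the linear branch of `τ_n`, which carries mass of
`[0, r)` beyond `r`, propagates the vanishing backwards. Hence every fixed point is decreasing,
without any uniqueness of fixed points.

For a decreasing normalized fixed point, `f x ≤ 1 / x`, and evaluating the fixed point equation on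
the first cell gives `f 0 ≤ a_n f 0 + D + D₁ f 0`, a bound independent of `k`. Weak limits of
decreasing functions are almost everywhere limits, by comparison with difference quotients of the
primitive of the limit; dominated convergence gives the rest, invariance being obtained by testing
against a continuous function sampled at the left endpoints of the cells.
-/

open scoped Topology BoundedContinuousFunction

section Discrete

theorem sum_range_mul_eq_sum_sub_mul_sum_range (c p : ℕ → ℝ) (m : ℕ) :
    ∑ j ∈ Finset.range m, c j * p j =
      ∑ j ∈ Finset.range m, (c j - c (j + 1)) * ∑ l ∈ Finset.range (j + 1), p l +
        c m * ∑ l ∈ Finset.range m, p l := by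
  induction m with
  | zero => simp
  | succ m ih =>
    rw [Finset.sum_range_succ, ih, Finset.sum_range_succ _ m, Finset.sum_range_succ p m]
    ring

theorem eq_sum_mul_of_le_sum_mul {ι : Type*} {s : Finset ι} {w n : ι → ℝ} {R : ι → ι → ℝ}
    (hw : ∀ i ∈ s, 0 < w i) (hn : ∀ j ∈ s, 0 ≤ n j) (hR : ∀ j ∈ s, ∑ i ∈ s, w i * R j i ≤ w j)
    (hle : ∀ i ∈ s, n i ≤ ∑ j ∈ s, n j * R j i) : ∀ i ∈ s, n i = ∑ j ∈ s, n j * R j i := by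
  have hsum : ∑ i ∈ s, w i * (∑ j ∈ s, n j * R j i) ≤ ∑ i ∈ s, w i * n i :=
    calc ∑ i ∈ s, w i * (∑ j ∈ s, n j * R j i)
        = ∑ j ∈ s, n j * ∑ i ∈ s, w i * R j i := by
          simp only [Finset.mul_sum]
          rw [Finset.sum_comm]
          exact Finset.sum_congr rfl fun _ _ => Finset.sum_congr rfl fun _ _ => by ring
      _ ≤ ∑ j ∈ s, n j * w j :=
          Finset.sum_le_sum fun j hj => mul_le_mul_of_nonneg_left (hR j hj) (hn j hj)
      _ = ∑ i ∈ s, w i * n i := Finset.sum_congr rfl fun _ _ => mul_comm _ _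
  have hterm : ∀ i ∈ s, w i * n i ≤ w i * ∑ j ∈ s, n j * R j i :=
    fun i hi => mul_le_mul_of_nonneg_left (hle i hi) (hw i hi).le
  have heq := (Finset.sum_eq_sum_iff_of_le hterm).1 ((Finset.sum_le_sum hterm).antisymm hsum)
  exact fun i hi => mul_left_cancel₀ (hw i hi).ne' (heq i hi)

theorem negPart_le_sum_negPart_mul {ι : Type*} {s : Finset ι} {b r : ι → ℝ} {x : ℝ}
    (hr : ∀ j ∈ s, 0 ≤ r j) (hx : x = ∑ j ∈ s, b j * r j) : x⁻ ≤ ∑ j ∈ s, (b j)⁻ * r j := by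
  refine sup_le ?_ (Finset.sum_nonneg fun j hj => mul_nonneg (negPart_nonneg _) (hr j hj))
  rw [hx, ← Finset.sum_neg_distrib]
  refine Finset.sum_le_sum fun j hj => ?_
  rw [← neg_mul]
  exact mul_le_mul_of_nonneg_right (neg_le_negPart (b j)) (hr j hj)

variable {k : ℕ} {S : ℕ → ℕ → ℝ}

theorem sum_succ_mul_sub_succ {t : ℕ → ℝ} (ht : t k = 0) :
    ∑ i ∈ Finset.range k, ((i : ℝ) + 1) * (t i - t (i + 1)) = ∑ i ∈ Finset.range k, t i := by
  have h := sum_range_mul_eq_sum_sub_mul_sum_range t 1 k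
  simp only [Pi.one_apply, mul_one, Finset.sum_const, Finset.card_range, nsmul_eq_mul, ht,
    zero_mul, add_zero, Nat.cast_add, Nat.cast_one] at h
  simpa only [mul_comm] using h.symm

theorem sum_Ico_eq_sum_mul_of_eq_sum_mul_sub {n : ℕ → ℝ} (hS : ∀ j, S j k = 0)
    (hn : ∀ i < k, n i = ∑ j ∈ Finset.range k, n j * (S j i - S j (i + 1))) {m : ℕ}
    (hm : m ≤ k) :
    ∑ i ∈ Finset.Ico m k, n i = ∑ j ∈ Finset.range k, n j * S j m := by
  rw [Finset.sum_congr rfl fun i hi => hn i (Finset.mem_Ico.1 hi).2, Finset.sum_comm]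
  refine Finset.sum_congr rfl fun j _ => ?_
  rw [← Finset.mul_sum, ← neg_inj, ← mul_neg, ← Finset.sum_neg_distrib]
  simp only [neg_sub]
  rw [Finset.sum_Ico_sub _ hm, hS, zero_sub, mul_neg]

theorem eq_zero_of_eq_sum_mul_sub {n : ℕ → ℝ} (hn0 : ∀ j, 0 ≤ n j) (hS0 : ∀ j i, 0 ≤ S j i)
    (hS : ∀ j, S j k = 0) (hpos : ∀ j, j + 1 < k → 0 < S j (j + 1))
    (hn : ∀ i < k, n i = ∑ j ∈ Finset.range k, n j * (S j i - S j (i + 1)))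
    (hlast : ∀ j, j + 1 = k → n j = 0) : ∀ j < k, n j = 0 := by
  suffices htail : ∀ m ≤ k, ∑ i ∈ Finset.Ico m k, n i = 0 from fun j hj =>
    (Finset.sum_eq_zero_iff_of_nonneg fun i _ => hn0 i).1 (htail j hj.le) j
      (Finset.mem_Ico.2 ⟨le_rfl, hj⟩)
  intro m hm
  induction hm using Nat.decreasingInduction with
  | self => simp
  | of_succ m hmk ih =>
    rw [Finset.sum_eq_sum_Ico_succ_bot hmk, ih, add_zero]
    obtain hlt | heq := (Nat.succ_le_of_lt hmk).lt_or_eq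
    · rw [sum_Ico_eq_sum_mul_of_eq_sum_mul_sub hS hn hlt.le,
        Finset.sum_eq_zero_iff_of_nonneg fun j _ => mul_nonneg (hn0 j) (hS0 j _)] at ih
      exact (mul_eq_zero.1 (ih m (Finset.mem_range.2 hmk))).resolve_right (hpos m hlt).ne'
    · exact hlast m heq

theorem succ_le_of_eq_sum_mul {c : ℕ → ℝ} {P : ℕ → ℕ → ℝ} (hc0 : ∀ i, 0 ≤ c i) (hck : c k = 0)
    (hP0 : ∀ j i, 0 ≤ P j i) (hPk : ∀ j, P j k = 0)
    (hPsum : ∀ j < k, ∑ i ∈ Finset.range k, P j i ≤ 1)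
    (hanti : ∀ l i, ∑ j ∈ Finset.range l, P j (i + 1) ≤ ∑ j ∈ Finset.range l, P j i)
    (hpos : ∀ j, j + 1 < k → 0 < ∑ l ∈ Finset.range (j + 1), P l (j + 1))
    (hc : ∀ i, c i = ∑ j ∈ Finset.range k, c j * P j i) : ∀ j < k, c (j + 1) ≤ c j := by
  set S : ℕ → ℕ → ℝ := fun j i => ∑ l ∈ Finset.range (j + 1), P l i
  have hS0 : ∀ j i, 0 ≤ S j i := fun j i => Finset.sum_nonneg fun l _ => hP0 l i
  have hSk : ∀ j, S j k = 0 := fun j => Finset.sum_eq_zero fun l _ => hPk l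
  have hR0 : ∀ j i, 0 ≤ S j i - S j (i + 1) := fun j i => sub_nonneg.2 (hanti _ i)
  set b : ℕ → ℝ := fun j => c j - c (j + 1) with hb
  have hbS : ∀ i, c i = ∑ j ∈ Finset.range k, b j * S j i := fun i => by
    rw [hc i, sum_range_mul_eq_sum_sub_mul_sum_range, hck, zero_mul, add_zero]
  have hbR : ∀ i, b i = ∑ j ∈ Finset.range k, b j * (S j i - S j (i + 1)) := fun i => by
    simp only [mul_sub, Finset.sum_sub_distrib, ← hbS]
    rfl
  have hweight : ∀ j ∈ Finset.range k,
      ∑ i ∈ Finset.range k, ((i : ℝ) + 1) * (S j i - S j (i + 1)) ≤ (j : ℝ) + 1 := fun j hj => by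
    rw [sum_succ_mul_sub_succ (hSk j), Finset.sum_comm]
    simpa using Finset.sum_le_sum fun l (hl : l ∈ Finset.range (j + 1)) =>
      hPsum l (by rw [Finset.mem_range] at hj hl; omega)
  have hinv := eq_sum_mul_of_le_sum_mul (fun i _ => by positivity)
    (fun j _ => negPart_nonneg (b j)) hweight
    fun i _ => negPart_le_sum_negPart_mul (fun j _ => hR0 j i) (hbR i)
  have hlast : ∀ j, j + 1 = k → (b j)⁻ = 0 := fun j hj => by
    simpa only [hb, hj, hck, sub_zero, negPart_eq_zero] using hc0 j
  have hzero := eq_zero_of_eq_sum_mul_sub (fun j => negPart_nonneg (b j)) hS0 hSk hpos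
    (fun i hi => hinv i (Finset.mem_range.2 hi)) hlast
  exact fun j hj => sub_nonneg.1 (negPart_eq_zero.1 (hzero j hj))

end Discrete

section UnitInterval

theorem lam_eq_restrict_Ioo : lam = volume.restrict (Ioo 0 1) :=
  (Measure.restrict_congr_set Ioo_ae_eq_Icc).symm

instance instIsProbabilityMeasureLam : IsProbabilityMeasure lam := ⟨by simp [lam]⟩

theorem ae_lam_mem_Ioo : ∀ᵐ x ∂lam, x ∈ Ioo (0 : ℝ) 1 := by
  rw [lam_eq_restrict_Ioo]
  exact ae_restrict_mem measurableSet_Ioo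

theorem ae_lam_mem_Ico : ∀ᵐ x ∂lam, x ∈ Ico (0 : ℝ) 1 :=
  ae_lam_mem_Ioo.mono fun _ hx => Ioo_subset_Ico_self hx

theorem lam_restrict_of_subset {s : Set ℝ} (hs : s ⊆ Icc 0 1) :
    lam.restrict s = volume.restrict s :=
  Measure.restrict_restrict_of_subset hs

theorem lam_real_eq_of_subset {s : Set ℝ} (hs : s ⊆ Icc 0 1) : lam.real s = volume.real s := by
  rw [measureReal_def, lam, Measure.restrict_eq_self _ hs, measureReal_def]

end UnitInterval

section Cells

variable {k : ℕ}

theorem mem_Jint_iff (hk : 0 < k) {i : ℕ} {x : ℝ} : x ∈ Jint k i ↔ 0 ≤ x ∧ ⌊x * k⌋₊ = i := by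
  have hk' : (0 : ℝ) < k := Nat.cast_pos.2 hk
  rw [Jint, mem_Ico, div_le_iff₀ hk', lt_div_iff₀ hk']
  refine ⟨fun h => ?_, fun h => (Nat.floor_eq_iff (mul_nonneg h.1 hk'.le)).1 h.2⟩
  have hxk : 0 ≤ x * k := (Nat.cast_nonneg i).trans h.1
  exact ⟨nonneg_of_mul_nonneg_left hxk hk', (Nat.floor_eq_iff hxk).2 h⟩

theorem floor_mul_lt (hk : 0 < k) {x : ℝ} (hx : x ∈ Ico (0 : ℝ) 1) : ⌊x * k⌋₊ < k := by
  have hk' : (0 : ℝ) < k := Nat.cast_pos.2 hk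
  rw [Nat.floor_lt (mul_nonneg hx.1 hk'.le)]
  exact mul_lt_of_lt_one_left hk' hx.2

theorem Jint_subset_Ico (hk : 0 < k) {i : ℕ} (hi : i < k) : Jint k i ⊆ Ico 0 1 := by
  have hk' : (0 : ℝ) < k := Nat.cast_pos.2 hk
  refine Ico_subset_Ico (by positivity) ((div_le_one hk').2 ?_)
  exact_mod_cast hi

theorem left_mem_Jint (hk : 0 < k) (i : ℕ) : (i : ℝ) / k ∈ Jint k i := by
  have hk' : (0 : ℝ) < k := Nat.cast_pos.2 hk
  exact ⟨le_rfl, div_lt_div_of_pos_right (lt_add_one _) hk'⟩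

theorem lam_real_Jint (hk : 0 < k) {i : ℕ} (hi : i < k) : lam.real (Jint k i) = 1 / k := by
  rw [lam_real_eq_of_subset ((Jint_subset_Ico hk hi).trans Ico_subset_Icc_self), Jint,
    Real.volume_real_Ico_of_le (by gcongr; linarith), ← sub_div, add_sub_cancel_left]

theorem measurableSet_Jint (i : ℕ) : MeasurableSet (Jint k i) := measurableSet_Ico

theorem Qk_apply {g : ℝ → ℝ} (hk : 0 < k) {i : ℕ} (hi : i < k) {x : ℝ} (hx : x ∈ Jint k i) :
    Qk k g x = k * ∫ y in Jint k i, g y ∂lam := by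
  rw [Qk, Finset.sum_eq_single_of_mem i (Finset.mem_range.2 hi), indicator_of_mem hx]
  exact fun j _ hj => indicator_of_notMem
    (fun h => hj (((mem_Jint_iff hk).1 h).2.symm.trans ((mem_Jint_iff hk).1 hx).2)) _

variable {α : Type*} {mα : MeasurableSpace α} {μ : Measure α}

theorem measure_preimage_Jint_eq_zero (hk : 0 < k) {ρ : α → ℝ} (hρ : ∀ᵐ x ∂μ, ρ x ∈ Ico (0 : ℝ) 1)
    {i : ℕ} (hi : k ≤ i) : μ (ρ ⁻¹' Jint k i) = 0 := by
  refine measure_eq_zero_iff_ae_notMem.2 (hρ.mono fun x hx hx' => hi.not_gt ?_)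
  exact ((mem_Jint_iff hk).1 hx').2 ▸ floor_mul_lt hk hx

theorem integral_floor_mul_eq_sum (hk : 0 < k) {ρ : α → ℝ} (hρm : AEMeasurable ρ μ)
    (hρ : ∀ᵐ x ∂μ, ρ x ∈ Ico (0 : ℝ) 1) {h : α → ℝ} (hh : Integrable h μ) (G : ℕ → ℝ) :
    ∫ x, G ⌊ρ x * k⌋₊ * h x ∂μ =
      ∑ i ∈ Finset.range k, G i * ∫ x in ρ ⁻¹' Jint k i, h x ∂μ := by
  have hmeas : ∀ i, NullMeasurableSet (ρ ⁻¹' Jint k i) μ :=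
    fun i => hρm.nullMeasurableSet_preimage (measurableSet_Jint i)
  have hsum : ∀ᵐ x ∂μ, G ⌊ρ x * k⌋₊ * h x =
      ∑ i ∈ Finset.range k, (ρ ⁻¹' Jint k i).indicator (fun x => G i * h x) x := by
    filter_upwards [hρ] with x hx
    have hxJ : x ∈ ρ ⁻¹' Jint k ⌊ρ x * k⌋₊ := (mem_Jint_iff hk).2 ⟨hx.1, rfl⟩
    rw [Finset.sum_eq_single_of_mem ⌊ρ x * k⌋₊ (Finset.mem_range.2 (floor_mul_lt hk hx)),
      indicator_of_mem hxJ]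
    intro i _ hi
    refine indicator_of_notMem (fun hxi => hi ?_) _
    exact ((mem_Jint_iff hk).1 hxi).2.symm
  rw [integral_congr_ae hsum,
    integral_finsetSum _ fun i _ => (hh.const_mul (G i)).indicator₀ (hmeas i)]
  simp only [integral_indicator₀ (hmeas _), integral_const_mul]

theorem sum_measureReal_Jint {ν : Measure ℝ} [IsFiniteMeasure ν] (h0 : ν (Iio 0) = 0) (l : ℕ) :
    ∑ j ∈ Finset.range l, ν.real (Jint k j) = ν.real (Iio ((l : ℝ) / k)) := by
  induction l with
  | zero => simp [measureReal_def, h0]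
  | succ l ih =>
    have hle : (l : ℝ) / k ≤ ((l : ℝ) + 1) / k := by gcongr; linarith
    rw [Finset.sum_range_succ, ih, Nat.cast_add_one, ← Iio_union_Ico_eq_Iio hle,
      measureReal_union (Iio_disjoint_Ici le_rfl |>.mono_right Ico_subset_Ici_self)
        (measurableSet_Jint l), Jint]

theorem sum_measureReal_preimage_Jint (hk : 0 < k) [IsFiniteMeasure μ] {ρ : α → ℝ}
    (hρm : AEMeasurable ρ μ) (hρ : ∀ᵐ x ∂μ, ρ x ∈ Ico (0 : ℝ) 1) :
    ∑ i ∈ Finset.range k, μ.real (ρ ⁻¹' Jint k i) = μ.real univ := by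
  simpa using (integral_floor_mul_eq_sum hk hρm hρ (integrable_const (1 : ℝ)) 1).symm

end Cells

namespace IsUlamFixed

variable {σ f : ℝ → ℝ} {k : ℕ}

theorem integrable (h : IsUlamFixed σ k f) : Integrable f lam := h.1

theorem nonneg (h : IsUlamFixed σ k f) {x : ℝ} (hx : x ∈ Icc (0 : ℝ) 1) : 0 ≤ f x := h.2.2.1 x hx

theorem integral_eq_one (h : IsUlamFixed σ k f) : ∫ x, f x ∂lam = 1 := h.2.2.2.1

theorem eq_of_mem_Jint (h : IsUlamFixed σ k f) (hk : 0 < k) {i : ℕ} (hi : i < k) {x : ℝ}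
    (hx : x ∈ Jint k i) : f x = f (i / k) :=
  h.2.1 i hi x hx _ (left_mem_Jint hk i)

theorem eq_floor (h : IsUlamFixed σ k f) (hk : 0 < k) {x : ℝ} (hx : x ∈ Ico (0 : ℝ) 1) :
    f x = f (⌊x * k⌋₊ / k) :=
  h.eq_of_mem_Jint hk (floor_mul_lt hk hx) ((mem_Jint_iff hk).2 ⟨hx.1, rfl⟩)

theorem eq_mul_setIntegral_Jint (h : IsUlamFixed σ k f) (hk : 0 < k) {i : ℕ} (hi : i < k) :
    f (i / k) = k * ∫ x in Jint k i, f x ∂lam := by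
  have hk' : (k : ℝ) ≠ 0 := Nat.cast_ne_zero.2 hk.ne'
  rw [setIntegral_congr_fun (measurableSet_Jint _) fun x hx => h.eq_of_mem_Jint hk hi hx,
    setIntegral_const, lam_real_Jint hk hi, smul_eq_mul, ← mul_assoc, mul_one_div_cancel hk',
    one_mul]

theorem setIntegral_Jint (h : IsUlamFixed σ k f) (hk : 0 < k) {i : ℕ} (hi : i < k) :
    ∫ x in Jint k i, f x ∂lam = ∫ x in σ ⁻¹' Jint k i, f x ∂lam := by
  have hk' : (k : ℝ) ≠ 0 := Nat.cast_ne_zero.2 hk.ne'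
  obtain ⟨g, -, hg, hQ⟩ := h.2.2.2.2
  calc ∫ x in Jint k i, f x ∂lam
      = ∫ x in Jint k i, Qk k g x ∂lam :=
        setIntegral_congr_ae (measurableSet_Jint _) (hQ.mono fun x hx _ => hx.symm)
    _ = ∫ _ in Jint k i, k * ∫ y in Jint k i, g y ∂lam ∂lam :=
        setIntegral_congr_fun (measurableSet_Jint _) fun x hx => Qk_apply hk hi hx
    _ = ∫ y in Jint k i, g y ∂lam := by
        rw [setIntegral_const, lam_real_Jint hk hi, smul_eq_mul, ← mul_assoc,
          one_div_mul_cancel hk', one_mul]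
    _ = ∫ x in σ ⁻¹' Jint k i, f x ∂lam :=
        hg _ (measurableSet_Jint _) ((Jint_subset_Ico hk hi).trans Ico_subset_Icc_self)

theorem setIntegral_eq_sum (h : IsUlamFixed σ k f) (hk : 0 < k) (E : Set ℝ) :
    ∫ x in E, f x ∂lam = ∑ j ∈ Finset.range k, f (j / k) * lam.real (Jint k j ∩ E) := by
  have hmem : ∀ᵐ x ∂lam.restrict E, x ∈ Ico (0 : ℝ) 1 := ae_restrict_of_ae ae_lam_mem_Ico
  rw [integral_congr_ae (hmem.mono fun x hx => (h.eq_floor hk hx).trans (mul_one _).symm),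
    integral_floor_mul_eq_sum (ρ := fun x => x) hk aemeasurable_id' hmem (integrable_const 1)
      fun i => f (i / k)]
  simp only [preimage_id', setIntegral_const, smul_eq_mul, mul_one,
    measureReal_restrict_apply (measurableSet_Jint _)]

theorem integral_floor_comp (h : IsUlamFixed σ k f) (hk : 0 < k) (hσm : AEMeasurable σ lam)
    (hσ : ∀ᵐ x ∂lam, σ x ∈ Ico (0 : ℝ) 1) (G : ℕ → ℝ) :
    ∫ x, G ⌊σ x * k⌋₊ * f x ∂lam = ∫ x, G ⌊x * k⌋₊ * f x ∂lam := by
  rw [integral_floor_mul_eq_sum hk hσm hσ h.integrable,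
    integral_floor_mul_eq_sum (ρ := fun x => x) hk aemeasurable_id' ae_lam_mem_Ico h.integrable]
  refine Finset.sum_congr rfl fun i hi => ?_
  rw [← h.setIntegral_Jint hk (Finset.mem_range.1 hi), preimage_id']

end IsUlamFixed

section UlamMatrix

/-- The Ulam matrix of `σ`: the probability that `σ` maps a uniformly distributed point of the
`j`-th cell into the `i`-th cell. -/
noncomputable def ulamMatrix (σ : ℝ → ℝ) (k j i : ℕ) : ℝ :=
  k * lam.real (Jint k j ∩ σ ⁻¹' Jint k i)

/-- The maps `σ` whose Frobenius–Perron operator sends decreasing functions to decreasing ones.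
This is tested on the indicators of `[0, r)`, comparing the mass of `P_σ` on adjacent intervals of
equal length; `measure_pos` adds that `σ` carries part of `[0, r)` to every interval starting
at `r`, which excludes maps such as the identity. -/
structure PreservesAntitone (σ : ℝ → ℝ) : Prop where
  aemeasurable : AEMeasurable σ lam
  ae_mem : ∀ᵐ x ∂lam, σ x ∈ Ico (0 : ℝ) 1
  measure_le : ∀ r s h : ℝ, 0 ≤ s → 0 < h →
    lam.real (Iio r ∩ σ ⁻¹' Ico (s + h) (s + 2 * h)) ≤ lam.real (Iio r ∩ σ ⁻¹' Ico s (s + h))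
  measure_pos : ∀ r h : ℝ, 0 < r → 0 < h → r + h ≤ 1 →
    0 < lam.real (Iio r ∩ σ ⁻¹' Ico r (r + h))

variable {σ f : ℝ → ℝ} {k : ℕ}

theorem ulamMatrix_nonneg (σ : ℝ → ℝ) (k j i : ℕ) : 0 ≤ ulamMatrix σ k j i :=
  mul_nonneg (Nat.cast_nonneg k) measureReal_nonneg

theorem sum_range_ulamMatrix (σ : ℝ → ℝ) (k l i : ℕ) :
    ∑ j ∈ Finset.range l, ulamMatrix σ k j i =
      k * lam.real (Iio ((l : ℝ) / k) ∩ σ ⁻¹' Jint k i) := by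
  have h0 : lam.restrict (σ ⁻¹' Jint k i) (Iio 0) = 0 := measure_eq_zero_iff_ae_notMem.2 <|
    ae_restrict_of_ae <| ae_lam_mem_Ico.mono fun x hx => not_lt.2 hx.1
  simp only [ulamMatrix, ← Finset.mul_sum, ← measureReal_restrict_apply (measurableSet_Jint _),
    ← measureReal_restrict_apply measurableSet_Iio, sum_measureReal_Jint h0]

theorem ulamMatrix_eq_zero (hk : 0 < k) (hσ : ∀ᵐ x ∂lam, σ x ∈ Ico (0 : ℝ) 1) (j : ℕ) {i : ℕ}
    (hi : k ≤ i) : ulamMatrix σ k j i = 0 := by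
  have h0 : lam (Jint k j ∩ σ ⁻¹' Jint k i) = 0 :=
    measure_mono_null inter_subset_right (measure_preimage_Jint_eq_zero hk hσ hi)
  rw [ulamMatrix, measureReal_def, h0, ENNReal.toReal_zero, mul_zero]

theorem sum_ulamMatrix (hk : 0 < k) (hσm : AEMeasurable σ lam)
    (hσ : ∀ᵐ x ∂lam, σ x ∈ Ico (0 : ℝ) 1) {j : ℕ} (hj : j < k) :
    ∑ i ∈ Finset.range k, ulamMatrix σ k j i = 1 := by
  have h := sum_measureReal_preimage_Jint hk (hσm.mono_measure Measure.restrict_le_self)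
    (ae_restrict_of_ae (s := Jint k j) hσ)
  simp only [measureReal_restrict_apply' (measurableSet_Jint j), inter_comm _ (Jint k j),
    inter_univ, lam_real_Jint hk hj] at h
  simp only [ulamMatrix, ← Finset.mul_sum, h]
  exact mul_one_div_cancel (Nat.cast_ne_zero.2 hk.ne')

theorem IsUlamFixed.eq_sum_mul_ulamMatrix (h : IsUlamFixed σ k f) (hk : 0 < k) {i : ℕ}
    (hi : i < k) :
    f (i / k) = ∑ j ∈ Finset.range k, f (j / k) * ulamMatrix σ k j i := by
  rw [h.eq_mul_setIntegral_Jint hk hi, h.setIntegral_Jint hk hi, h.setIntegral_eq_sum hk,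
    Finset.mul_sum]
  exact Finset.sum_congr rfl fun j _ => mul_left_comm _ _ _

namespace PreservesAntitone

theorem sum_ulamMatrix_succ_le (hσ : PreservesAntitone σ) (hk : 0 < k) (l i : ℕ) :
    ∑ j ∈ Finset.range l, ulamMatrix σ k j (i + 1) ≤ ∑ j ∈ Finset.range l, ulamMatrix σ k j i := by
  have hk' : (0 : ℝ) < k := Nat.cast_pos.2 hk
  have hJ : Jint k i = Ico ((i : ℝ) / k) (i / k + 1 / k) := by rw [Jint, add_div]
  have hJs : Jint k (i + 1) = Ico ((i : ℝ) / k + 1 / k) (i / k + 2 * (1 / k)) := by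
    rw [Jint]
    congr 1 <;> push_cast <;> ring
  rw [sum_range_ulamMatrix, sum_range_ulamMatrix, hJ, hJs]
  exact mul_le_mul_of_nonneg_left
    (hσ.measure_le _ _ _ (by positivity) (one_div_pos.2 hk')) hk'.le

theorem sum_ulamMatrix_pos (hσ : PreservesAntitone σ) {j : ℕ} (hj : j + 1 < k) :
    0 < ∑ l ∈ Finset.range (j + 1), ulamMatrix σ k l (j + 1) := by
  have hk : (0 : ℝ) < k := Nat.cast_pos.2 (by omega)
  have hjk : ((j + 1 : ℕ) : ℝ) + 1 ≤ k := by exact_mod_cast hj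
  rw [sum_range_ulamMatrix, Jint, add_div]
  refine mul_pos hk (hσ.measure_pos _ _ (by positivity) (by positivity) ?_)
  rwa [← add_div, div_le_one hk]

end PreservesAntitone

theorem IsUlamFixed.antitoneOn (h : IsUlamFixed σ k f) (hk : 0 < k) (hσ : PreservesAntitone σ) :
    AntitoneOn f (Ico 0 1) := by
  set c : ℕ → ℝ := fun i => if i < k then f (i / k) else 0 with hcdef
  have hc : ∀ i < k, c i = f (i / k) := fun i hi => if_pos hi
  have hc0 : ∀ i, 0 ≤ c i := fun i => by
    rw [hcdef]
    dsimp only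
    split_ifs with hi
    · exact h.nonneg (Ico_subset_Icc_self (Jint_subset_Ico hk hi (left_mem_Jint hk i)))
    · exact le_rfl
  have hfix : ∀ i, c i = ∑ j ∈ Finset.range k, c j * ulamMatrix σ k j i := fun i => by
    rw [Finset.sum_congr rfl fun j hj => by rw [hc j (Finset.mem_range.1 hj)]]
    obtain hi | hi := lt_or_ge i k
    · rw [hc i hi, h.eq_sum_mul_ulamMatrix hk hi]
    · rw [hcdef]
      simp [hi.not_gt, ulamMatrix_eq_zero hk hσ.ae_mem _ hi]
  have hstep : ∀ j < k, c (j + 1) ≤ c j :=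
    succ_le_of_eq_sum_mul hc0 (if_neg (lt_irrefl k)) (ulamMatrix_nonneg σ k)
      (fun j => ulamMatrix_eq_zero hk hσ.ae_mem j le_rfl)
      (fun j hj => (sum_ulamMatrix hk hσ.aemeasurable hσ.ae_mem hj).le)
      (hσ.sum_ulamMatrix_succ_le hk) (fun j => hσ.sum_ulamMatrix_pos) hfix
  have hanti : Antitone c := antitone_nat_of_succ_le fun i =>
    (lt_or_ge i k).elim (hstep i) fun hi => (if_neg (by omega)).le.trans (hc0 i)
  intro x hx y hy hxy
  rw [h.eq_floor hk hx, h.eq_floor hk hy, ← hc _ (floor_mul_lt hk hx), ← hc _ (floor_mul_lt hk hy)]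
  exact hanti (Nat.floor_mono (by gcongr))

end UlamMatrix

section ConvexBranch

theorem volume_real_le_of_forall_sub_le {E : Set ℝ} {p w : ℝ} (hp : E ⊆ Ici p) (hw : 0 ≤ w)
    (hE : ∀ x ∈ E, x - p ≤ w) : volume.real E ≤ w := by
  have hsub : E ⊆ Icc p (p + w) := fun x hx => ⟨hp hx, by linarith [hE x hx]⟩
  calc volume.real E ≤ volume.real (Icc p (p + w)) :=
        measureReal_mono hsub measure_Icc_lt_top.ne
    _ = w := by rw [Real.volume_real_Icc_of_le (by linarith), add_sub_cancel_left]

variable {p q s t : ℝ} {φ : ℝ → ℝ}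

theorem volume_sublevel_ne_top : volume {x ∈ Ico p q | φ x < t} ≠ ⊤ :=
  measure_ne_top_of_subset (fun _ hx => hx.1) measure_Ico_lt_top.ne

theorem sub_le_volume_real_sublevel (hφ : ConvexOn ℝ (Ico p q) φ) (hp : φ p < t) {z : ℝ}
    (hz : z ∈ {x ∈ Ico p q | φ x < t}) : z - p ≤ volume.real {x ∈ Ico p q | φ x < t} := by
  have hpt : p ∈ {x ∈ Ico p q | φ x < t} := ⟨⟨le_rfl, hz.1.1.trans_lt hz.1.2⟩, hp⟩
  have hsub : Icc p z ⊆ {x ∈ Ico p q | φ x < t} := (hφ.convex_lt t).ordConnected.out hpt hz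
  rw [← Real.volume_real_Icc_of_le hz.1.1]
  exact measureReal_mono hsub volume_sublevel_ne_top

theorem volume_real_sublevel_add_le (hφ : ConvexOn ℝ (Ico p q) φ) (hpq : p < q) (hps : φ p ≤ s)
    (hst : s < t) :
    volume.real {x ∈ Ico p q | φ x < s} + volume.real {x ∈ Ico p q | φ x < t} ≤
      2 * volume.real {x ∈ Ico p q | φ x < (s + t) / 2} := by
  set W := volume.real {x ∈ Ico p q | φ x < (s + t) / 2}
  have hp : p ∈ Ico p q := ⟨le_rfl, hpq⟩
  have hmid : ∀ x ∈ Ico p q, φ x ≤ s → ∀ y ∈ {x ∈ Ico p q | φ x < t},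
      (x - p) + (y - p) ≤ 2 * W := by
    rintro x hx hxs y ⟨hy, hyt⟩
    have hhalf : (0 : ℝ) ≤ 1 / 2 := by norm_num
    have hconv := hφ.2 hx hy hhalf hhalf (by norm_num)
    have hmem : (1 / 2 : ℝ) • x + (1 / 2 : ℝ) • y ∈ {x ∈ Ico p q | φ x < (s + t) / 2} :=
      ⟨hφ.1 hx hy hhalf hhalf (by norm_num), by simp only [smul_eq_mul] at hconv ⊢; linarith⟩
    have := sub_le_volume_real_sublevel hφ (by linarith) hmem
    simp only [smul_eq_mul] at this
    linarith
  have hupper : ∀ x ∈ Ico p q, φ x ≤ s →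
      volume.real {x ∈ Ico p q | φ x < t} ≤ 2 * W - (x - p) := fun x hx hxs =>
    volume_real_le_of_forall_sub_le (fun y hy => hy.1.1)
      (by linarith [hmid x hx hxs p ⟨hp, hps.trans_lt hst⟩])
      fun y hy => by linarith [hmid x hx hxs y hy]
  have hlower : volume.real {x ∈ Ico p q | φ x < s} ≤
      2 * W - volume.real {x ∈ Ico p q | φ x < t} :=
    volume_real_le_of_forall_sub_le (fun y hy => hy.1.1) (by linarith [hupper p hp hps])
      fun y hy => by linarith [hupper y hy.1 hy.2.le]
  linarith

theorem volume_real_inter_preimage_Ico (hφ : ConvexOn ℝ (Ico p q) φ) (hst : s ≤ t) :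
    volume.real (Ico p q ∩ φ ⁻¹' Ico s t) =
      volume.real {x ∈ Ico p q | φ x < t} - volume.real {x ∈ Ico p q | φ x < s} := by
  have hdiff : Ico p q ∩ φ ⁻¹' Ico s t =
      {x ∈ Ico p q | φ x < t} \ {x ∈ Ico p q | φ x < s} := by
    ext x
    simp only [mem_inter_iff, mem_preimage, mem_Ico, Set.mem_sdiff, mem_ofPred_eq]
    grind
  have hsub : {x ∈ Ico p q | φ x < s} ⊆ {x ∈ Ico p q | φ x < t} :=
    fun x hx => ⟨hx.1, hx.2.trans_le hst⟩
  rw [hdiff, measureReal_sdiff hsub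
    (hφ.convex_lt s).ordConnected.measurableSet volume_sublevel_ne_top]

theorem volume_real_inter_preimage_Ico_le (hφ : ConvexOn ℝ (Ico p q) φ) (hps : φ p ≤ s) {h : ℝ}
    (hh : 0 < h) :
    volume.real (Ico p q ∩ φ ⁻¹' Ico (s + h) (s + 2 * h)) ≤
      volume.real (Ico p q ∩ φ ⁻¹' Ico s (s + h)) := by
  obtain hqp | hpq := le_or_gt q p
  · simp [Ico_eq_empty hqp.not_gt]
  have hmid := volume_real_sublevel_add_le hφ hpq hps (t := s + 2 * h) (by linarith)
  rw [show (s + (s + 2 * h)) / 2 = s + h by ring] at hmid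
  rw [volume_real_inter_preimage_Ico hφ (by linarith),
    volume_real_inter_preimage_Ico hφ (by linarith)]
  linarith

end ConvexBranch

section PiecewiseConvex

theorem setIntegral_Ico_eq_add_sum {μ : Measure ℝ} {a : ℕ → ℝ} {c : ℝ} {f : ℝ → ℝ}
    (ha : Antitone a) (hc : ∀ n, c ≤ a n) (hf : IntegrableOn f (Ico c (a 0)) μ) (n : ℕ) :
    ∫ x in Ico c (a 0), f x ∂μ = (∫ x in Ico c (a n), f x ∂μ) +
      ∑ m ∈ Finset.range n, ∫ x in Ico (a (m + 1)) (a m), f x ∂μ := by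
  induction n with
  | zero => simp
  | succ n ih =>
    have hle : a (n + 1) ≤ a n := ha n.le_succ
    have ha0 : a n ≤ a 0 := ha n.zero_le
    rw [ih, Finset.sum_range_succ, ← Ico_union_Ico_eq_Ico (hc (n + 1)) hle,
      setIntegral_union Ico_disjoint_Ico_same measurableSet_Ico
        (hf.mono_set (Ico_subset_Ico_right (hle.trans ha0)))
        (hf.mono_set (Ico_subset_Ico (hc (n + 1)) ha0))]
    ring

/-- A map of `[0, 1]` with convex branches on the intervals `[a (m + 1), a m)`, which exhaust
`(0, 1)`. No derivative is prescribed: `d (m + 1)` is any lower bound for the slopes of the chords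
issuing from the left endpoint `a (m + 1)` of a branch. -/
structure IsPiecewiseConvex (τ : ℝ → ℝ) (a d : ℕ → ℝ) : Prop where
  mapsTo : MapsTo τ (Icc 0 1) (Icc 0 1)
  a_zero : a 0 = 1
  a_anti : StrictAnti a
  a_lim : Tendsto a atTop (𝓝 0)
  convexOn : ∀ m, ConvexOn ℝ (Ico (a (m + 1)) (a m)) τ
  map_a : ∀ m, τ (a (m + 1)) = 0
  d_pos : ∀ m, 0 < d (m + 1)
  mul_sub_le : ∀ m, ∀ x ∈ Ico (a (m + 1)) (a m), d (m + 1) * (x - a (m + 1)) ≤ τ x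

theorem PCApprox.isPiecewiseConvex {τ : ℝ → ℝ} {a d : ℕ → ℝ} {N : ℕ} (h : PCApprox τ a d N) :
    IsPiecewiseConvex τ a d where
  mapsTo := h.mapsTo
  a_zero := h.a_zero
  a_anti := h.a_anti
  a_lim := h.a_lim
  convexOn := h.conv
  map_a := h.map_a
  d_pos := h.d_pos
  mul_sub_le m x hx := by
    obtain heq | hlt := hx.1.eq_or_lt
    · rw [← heq, h.map_a m, sub_self, mul_zero]
    · have hslope := (h.conv m).le_slope_of_hasDerivWithinAt
        ⟨le_rfl, h.a_anti m.lt_succ_self⟩ hx hlt ((h.deriv_a m).mono Ico_subset_Ici_self)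
      rwa [slope_def_field, h.map_a m, sub_zero, le_div_iff₀ (sub_pos.2 hlt)] at hslope

namespace IsPiecewiseConvex

variable {τ : ℝ → ℝ} {a d : ℕ → ℝ}

theorem a_pos (h : IsPiecewiseConvex τ a d) (n : ℕ) : 0 < a n :=
  (h.a_anti.antitone.le_of_tendsto h.a_lim (n + 1)).trans_lt (h.a_anti n.lt_succ_self)

theorem a_le_one (h : IsPiecewiseConvex τ a d) (n : ℕ) : a n ≤ 1 :=
  h.a_zero ▸ h.a_anti.antitone n.zero_le

theorem branch_subset (h : IsPiecewiseConvex τ a d) (m : ℕ) :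
    Ico (a (m + 1)) (a m) ⊆ Icc 0 1 :=
  fun _ hx => ⟨(h.a_pos _).le.trans hx.1, hx.2.le.trans (h.a_le_one m)⟩

theorem exists_mem_branch (h : IsPiecewiseConvex τ a d) {x : ℝ} (hx : x ∈ Ioo (0 : ℝ) 1) :
    ∃ m, x ∈ Ico (a (m + 1)) (a m) := by
  classical
  have hex : ∃ m, a m ≤ x := (h.a_lim.eventually_lt_const hx.1).exists.imp fun _ hm => hm.le
  have hspec := Nat.find_spec hex
  cases hfind : Nat.find hex with
  | zero =>
    rw [hfind, h.a_zero] at hspec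
    exact absurd hx.2 hspec.not_gt
  | succ m => exact ⟨m, hfind ▸ hspec, not_le.1 (Nat.find_min hex (by omega))⟩

theorem lt_one (h : IsPiecewiseConvex τ a d) {x : ℝ} (hx : x ∈ Ioo (0 : ℝ) 1) : τ x < 1 := by
  obtain ⟨m, hm⟩ := h.exists_mem_branch hx
  have hunit := fun y hy => (h.mapsTo (h.branch_subset m hy) : τ y ∈ Icc (0 : ℝ) 1)
  by_contra! hτx
  obtain ⟨y, hxy, hya⟩ := exists_between hm.2
  have hax : a (m + 1) < x := hm.1.lt_of_ne fun e => by
    rw [← e, h.map_a m] at hτx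
    exact absurd hτx zero_lt_one.not_ge
  have hy : y ∈ Ico (a (m + 1)) (a m) := ⟨hm.1.trans hxy.le, hya⟩
  have hlt : τ x < τ y := (h.convexOn m).lt_right_of_left_lt
    ⟨le_rfl, h.a_anti m.lt_succ_self⟩ hy
    (by rw [openSegment_eq_Ioo (hax.trans hxy)]; exact ⟨hax, hxy⟩) (by rw [h.map_a m]; linarith)
  linarith [(hunit y hy).2]

theorem aemeasurable (h : IsPiecewiseConvex τ a d) : AEMeasurable τ lam := by
  have hbranch : ∀ m, AEMeasurable τ (volume.restrict (Ico (a (m + 1)) (a m))) := fun m => by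
    rw [Measure.restrict_congr_set Ioo_ae_eq_Ico.symm]
    have hconv := (h.convexOn m).subset Ioo_subset_Ico_self (convex_Ioo _ _)
    exact (hconv.continuousOn isOpen_Ioo).aemeasurable measurableSet_Ioo
  rw [lam_eq_restrict_Ioo]
  exact (aemeasurable_iUnion_iff.2 hbranch).mono_set fun x hx =>
    mem_iUnion.2 (h.exists_mem_branch hx)

theorem setIntegral_eq_add_sum (h : IsPiecewiseConvex τ a d) {f : ℝ → ℝ} (hf : Integrable f lam)
    (E : Set ℝ) (n : ℕ) :
    ∫ x in E, f x ∂lam = (∫ x in Ico 0 (a n) ∩ E, f x ∂lam) +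
      ∑ m ∈ Finset.range n, ∫ x in Ico (a (m + 1)) (a m) ∩ E, f x ∂lam := by
  have hsum := setIntegral_Ico_eq_add_sum (μ := lam.restrict E) h.a_anti.antitone
    (fun n => (h.a_pos n).le) hf.restrict.integrableOn n
  rw [h.a_zero, Measure.restrict_eq_self_of_ae_mem (ae_restrict_of_ae ae_lam_mem_Ico)] at hsum
  simpa only [Measure.restrict_restrict measurableSet_Ico] using hsum

theorem lam_real_eq_add_sum (h : IsPiecewiseConvex τ a d) (E : Set ℝ) (n : ℕ) :
    lam.real E = lam.real (Ico 0 (a n) ∩ E) +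
      ∑ m ∈ Finset.range n, lam.real (Ico (a (m + 1)) (a m) ∩ E) := by
  simpa using h.setIntegral_eq_add_sum (integrable_const (1 : ℝ)) E n

end IsPiecewiseConvex

end PiecewiseConvex

section ApproximatingMap

variable {τ : ℝ → ℝ} {a d : ℕ → ℝ} {n : ℕ} {x : ℝ}

theorem tauN_of_lt (hx : x < a n) : tauN τ a n x = x / a n := if_pos hx

theorem tauN_of_le (hx : a n ≤ x) : tauN τ a n x = τ x := if_neg hx.not_gt

theorem aemeasurable_tauN {μ : Measure ℝ} (hτ : AEMeasurable τ μ) (a : ℕ → ℝ) (n : ℕ) :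
    AEMeasurable (tauN τ a n) μ := by
  refine ⟨tauN (hτ.mk τ) a n,
    Measurable.ite measurableSet_Iio (measurable_id.div_const _) hτ.measurable_mk, ?_⟩
  filter_upwards [hτ.ae_eq_mk] with x hx
  rw [tauN, tauN, hx]

theorem convexOn_tauN_Ico_zero : ConvexOn ℝ (Ico 0 (a n)) (tauN τ a n) := by
  have hlin : ConvexOn ℝ (Ico 0 (a n)) fun x => x / a n :=
    ⟨convex_Ico _ _, fun x _ y _ u v _ _ _ => le_of_eq (by simp only [smul_eq_mul]; ring)⟩
  exact hlin.congr fun x hx => (tauN_of_lt hx.2).symm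

theorem lam_real_inter_Iio_inter_preimage_Ico_le {σ : ℝ → ℝ} {p q s h : ℝ}
    (hpq : Ico p q ⊆ Icc 0 1) (hσ : ConvexOn ℝ (Ico p q) σ) (hps : σ p ≤ s) (hh : 0 < h) (r : ℝ) :
    lam.real (Ico p q ∩ (Iio r ∩ σ ⁻¹' Ico (s + h) (s + 2 * h))) ≤
      lam.real (Ico p q ∩ (Iio r ∩ σ ⁻¹' Ico s (s + h))) := by
  have hsub : Ico p (min q r) ⊆ Ico p q := Ico_subset_Ico_right (min_le_left q r)
  rw [← inter_assoc, ← inter_assoc, Ico_inter_Iio,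
    lam_real_eq_of_subset (inter_subset_left.trans (hsub.trans hpq)),
    lam_real_eq_of_subset (inter_subset_left.trans (hsub.trans hpq))]
  exact volume_real_inter_preimage_Ico_le (hσ.subset hsub (convex_Ico _ _)) hps hh

namespace IsPiecewiseConvex

theorem tauN_eqOn_branch (h : IsPiecewiseConvex τ a d) {m : ℕ} (hm : m < n) :
    EqOn (tauN τ a n) τ (Ico (a (m + 1)) (a m)) :=
  fun _ hx => tauN_of_le ((h.a_anti.antitone hm).trans hx.1)

theorem tauN_mem_Ico (h : IsPiecewiseConvex τ a d) (n : ℕ) (hx : x ∈ Ioo (0 : ℝ) 1) :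
    tauN τ a n x ∈ Ico (0 : ℝ) 1 := by
  obtain hlt | hle := lt_or_ge x (a n)
  · rw [tauN_of_lt hlt]
    exact ⟨div_nonneg hx.1.le (h.a_pos n).le, (div_lt_one (h.a_pos n)).2 hlt⟩
  · rw [tauN_of_le hle]
    exact ⟨(h.mapsTo (Ioo_subset_Icc_self hx)).1, h.lt_one hx⟩

theorem tauN_measure_pos (h : IsPiecewiseConvex τ a d) (han : a n < 1) {r t : ℝ} (hr : 0 < r)
    (ht : 0 < t) (hrt : r + t ≤ 1) :
    0 < lam.real (Iio r ∩ tauN τ a n ⁻¹' Ico r (r + t)) := by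
  have ha := h.a_pos n
  have hlt : a n * r < min r (a n * (r + t)) :=
    lt_min (mul_lt_of_lt_one_left hr han) (mul_lt_mul_of_pos_left (lt_add_of_pos_right r ht) ha)
  have hsub : Ico (a n * r) (min r (a n * (r + t))) ⊆ Iio r ∩ tauN τ a n ⁻¹' Ico r (r + t) := by
    rintro x ⟨hx, hx'⟩
    obtain ⟨hxr, hxt⟩ := lt_min_iff.1 hx'
    refine ⟨hxr, ?_⟩
    rw [mem_preimage, tauN_of_lt (hxt.trans_le (mul_le_of_le_one_right ha.le hrt))]
    exact ⟨(le_div_iff₀' ha).2 hx, (div_lt_iff₀' ha).2 hxt⟩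
  have hunit : Ico (a n * r) (min r (a n * (r + t))) ⊆ Icc 0 1 := fun x hx =>
    ⟨(mul_pos ha hr).le.trans hx.1, by linarith [(lt_min_iff.1 hx.2).1]⟩
  calc 0 < volume.real (Ico (a n * r) (min r (a n * (r + t)))) := by
        rw [Real.volume_real_Ico_of_le hlt.le]
        exact sub_pos.2 hlt
    _ = lam.real (Ico (a n * r) (min r (a n * (r + t)))) := (lam_real_eq_of_subset hunit).symm
    _ ≤ _ := measureReal_mono hsub

theorem tauN_preservesAntitone (h : IsPiecewiseConvex τ a d) (han : a n < 1) :
    PreservesAntitone (tauN τ a n) where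
  aemeasurable := aemeasurable_tauN h.aemeasurable a n
  ae_mem := ae_lam_mem_Ioo.mono fun _ hx => h.tauN_mem_Ico n hx
  measure_le r s t hs ht := by
    rw [h.lam_real_eq_add_sum _ n, h.lam_real_eq_add_sum (Iio r ∩ _) n]
    refine add_le_add ?_ (Finset.sum_le_sum fun m hm => ?_)
    · refine lam_real_inter_Iio_inter_preimage_Ico_le
        (fun x hx => ⟨hx.1, hx.2.le.trans (h.a_le_one n)⟩) convexOn_tauN_Ico_zero ?_ ht r
      rwa [tauN_of_lt (h.a_pos n), zero_div]
    · have heq := h.tauN_eqOn_branch (Finset.mem_range.1 hm)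
      refine lam_real_inter_Iio_inter_preimage_Ico_le (h.branch_subset m)
        ((h.convexOn m).congr heq.symm) ?_ ht r
      rwa [heq ⟨le_rfl, h.a_anti m.lt_succ_self⟩, h.map_a m]
  measure_pos _ _ hr ht hrt := h.tauN_measure_pos han hr ht hrt

end IsPiecewiseConvex

end ApproximatingMap

section UniformBound

variable {f : ℝ → ℝ}

theorem setIntegral_lam_le_mul {S : Set ℝ} {p w B : ℝ} (hS : S ⊆ Icc 0 1) (hp : S ⊆ Ici p)
    (hw : 0 ≤ w) (hSw : ∀ x ∈ S, x - p ≤ w) (hB : 0 ≤ B) (h0 : ∀ x ∈ S, 0 ≤ f x)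
    (hf : ∀ x ∈ S, f x ≤ B) : ∫ x in S, f x ∂lam ≤ B * w :=
  calc ∫ x in S, f x ∂lam
      ≤ ‖∫ x in S, f x ∂lam‖ := le_abs_self _
    _ ≤ B * lam.real S := norm_setIntegral_le_of_norm_le_const (measure_lt_top _ _) fun x hx =>
        (Real.norm_of_nonneg (h0 x hx)).le.trans (hf x hx)
    _ ≤ B * w := by
        rw [lam_real_eq_of_subset hS]
        exact mul_le_mul_of_nonneg_left (volume_real_le_of_forall_sub_le hp hw hSw) hB

theorem mul_le_integral_lam_of_antitoneOn (hanti : AntitoneOn f (Ico 0 1)) (hf : Integrable f lam)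
    (h0 : 0 ≤ᵐ[lam] f) {x : ℝ} (hx : x ∈ Ico (0 : ℝ) 1) : x * f x ≤ ∫ y, f y ∂lam := by
  have hsub : Ico 0 x ⊆ Ico 0 1 := Ico_subset_Ico_right hx.2.le
  calc x * f x
      = ∫ _ in Ico 0 x, f x ∂lam := by
        rw [setIntegral_const, lam_real_eq_of_subset (hsub.trans Ico_subset_Icc_self),
          Real.volume_real_Ico_of_le hx.1, sub_zero, smul_eq_mul]
    _ ≤ ∫ y in Ico 0 x, f y ∂lam :=
        setIntegral_mono_on (integrable_const _) hf.integrableOn measurableSet_Ico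
          fun y hy => hanti (hsub hy) hx hy.2.le
    _ ≤ ∫ y, f y ∂lam := setIntegral_le_integral hf h0

theorem setIntegral_inter_preimage_Jint_zero_le {ρ : ℝ → ℝ} {p q c : ℝ}
    (h0 : ∀ x ∈ Icc (0 : ℝ) 1, 0 ≤ f x) (hanti : AntitoneOn f (Ico 0 1)) (hp : 0 ≤ p) (hpq : p < q)
    (hq : q ≤ 1) (hc : 0 < c) (hρ : ∀ x ∈ Ico p q, c * (x - p) ≤ ρ x) (k : ℕ) :
    ∫ x in Ico p q ∩ ρ ⁻¹' Jint k 0, f x ∂lam ≤ f p * (1 / k / c) := by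
  have hsub : Ico p q ⊆ Ico 0 1 := Ico_subset_Ico hp hq
  have hsub' : Ico p q ⊆ Icc 0 1 := hsub.trans Ico_subset_Icc_self
  have hp' : p ∈ Ico p q := left_mem_Ico.2 hpq
  refine setIntegral_lam_le_mul (inter_subset_left.trans hsub') (fun x hx => hx.1.1)
    (by positivity) (fun x hx => ?_) (h0 p (hsub' hp')) (fun x hx => h0 x (hsub' hx.1))
    fun x hx => hanti (hsub hp') (hsub hx.1) hx.1.1
  have hlt : ρ x < 1 / k := by simpa using hx.2.2
  exact (le_div_iff₀' hc).2 ((hρ x hx.1).trans hlt.le)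

namespace IsPiecewiseConvex

variable {τ : ℝ → ℝ} {a d : ℕ → ℝ} {n k N : ℕ}

theorem Dconst_nonneg (h : IsPiecewiseConvex τ a d) (N : ℕ) : 0 ≤ Dconst a d N :=
  Finset.sum_nonneg fun m _ => (one_div_pos.2 (mul_pos (h.a_pos _) (h.d_pos m))).le

theorem D₁_nonneg (h : IsPiecewiseConvex τ a d) (N : ℕ) : 0 ≤ D₁ d N :=
  tsum_nonneg fun m => (one_div_pos.2 (h.d_pos (m + N))).le

theorem sum_one_div_le_D₁ (h : IsPiecewiseConvex τ a d)
    (hd : Summable fun m => 1 / d (m + 1)) (N t : ℕ) :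
    ∑ m ∈ Finset.range t, 1 / d (N + m + 1) ≤ D₁ d N := by
  simp only [add_comm N]
  exact ((summable_nat_add_iff N).2 hd).sum_le_tsum _
    fun m _ => (one_div_pos.2 (h.d_pos (m + N))).le

theorem apply_zero_le_of_isUlamFixed (h : IsPiecewiseConvex τ a d) (han : a n < 1) (hk : 0 < k)
    (hf : IsUlamFixed (tauN τ a n) k f) :
    f 0 ≤ f 0 * a n + ∑ m ∈ Finset.range n, f (a (m + 1)) * (1 / d (m + 1)) := by
  have hk' : (k : ℝ) ≠ 0 := Nat.cast_ne_zero.2 hk.ne'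
  have hanti := hf.antitoneOn hk (h.tauN_preservesAntitone han)
  have h0 : ∀ x ∈ Icc (0 : ℝ) 1, 0 ≤ f x := fun _ => hf.nonneg
  have hlin :
      ∫ x in Ico 0 (a n) ∩ tauN τ a n ⁻¹' Jint k 0, f x ∂lam ≤ f 0 * (1 / k / (1 / a n)) :=
    setIntegral_inter_preimage_Jint_zero_le h0 hanti le_rfl (h.a_pos n) han.le
      (one_div_pos.2 (h.a_pos n)) (fun x hx => by
        rw [tauN_of_lt hx.2, sub_zero, one_div_mul_eq_div]) k
  have hbranch : ∀ m ∈ Finset.range n,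
      ∫ x in Ico (a (m + 1)) (a m) ∩ tauN τ a n ⁻¹' Jint k 0, f x ∂lam ≤
        f (a (m + 1)) * (1 / k / d (m + 1)) := fun m hm =>
    setIntegral_inter_preimage_Jint_zero_le h0 hanti (h.a_pos _).le (h.a_anti m.lt_succ_self)
      (h.a_le_one m) (h.d_pos m) (fun x hx => by
        rw [h.tauN_eqOn_branch (Finset.mem_range.1 hm) hx]
        exact h.mul_sub_le m x hx) k
  calc f 0
      = k * ∫ x in tauN τ a n ⁻¹' Jint k 0, f x ∂lam := by
        rw [← hf.setIntegral_Jint hk hk, ← hf.eq_mul_setIntegral_Jint hk hk, Nat.cast_zero,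
          zero_div]
    _ ≤ k * (f 0 * (1 / k / (1 / a n)) +
          ∑ m ∈ Finset.range n, f (a (m + 1)) * (1 / k / d (m + 1))) := by
        rw [h.setIntegral_eq_add_sum hf.integrable _ n]
        exact mul_le_mul_of_nonneg_left (add_le_add hlin (Finset.sum_le_sum hbranch))
          (Nat.cast_nonneg k)
    _ = f 0 * a n + ∑ m ∈ Finset.range n, f (a (m + 1)) * (1 / d (m + 1)) := by
        rw [mul_add, Finset.mul_sum]
        congr 1
        · field_simp
        · refine Finset.sum_congr rfl fun m _ => ?_
          have hd := (h.d_pos m).ne'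
          field_simp

theorem sum_apply_mul_le (h : IsPiecewiseConvex τ a d) (hd : Summable fun m => 1 / d (m + 1))
    (hanti : AntitoneOn f (Ico 0 1)) (h0 : 0 ≤ f 0) (hinv : ∀ x ∈ Ioo (0 : ℝ) 1, f x ≤ 1 / x)
    (hNn : N ≤ n) :
    ∑ m ∈ Finset.range n, f (a (m + 1)) * (1 / d (m + 1)) ≤ Dconst a d N + f 0 * D₁ d N := by
  have hmem : ∀ m, a (m + 1) ∈ Ioo (0 : ℝ) 1 := fun m =>
    ⟨h.a_pos _, (h.a_anti m.lt_succ_self).trans_le (h.a_le_one m)⟩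
  have hd0 : ∀ m, 0 ≤ 1 / d (m + 1) := fun m => (one_div_pos.2 (h.d_pos m)).le
  obtain ⟨t, rfl⟩ := Nat.exists_eq_add_of_le hNn
  rw [Finset.sum_range_add]
  refine add_le_add (Finset.sum_le_sum fun m _ => ?_) ?_
  · rw [← one_div_mul_one_div]
    exact mul_le_mul_of_nonneg_right (hinv _ (hmem m)) (hd0 m)
  · calc ∑ m ∈ Finset.range t, f (a (N + m + 1)) * (1 / d (N + m + 1))
        ≤ ∑ m ∈ Finset.range t, f 0 * (1 / d (N + m + 1)) :=
          Finset.sum_le_sum fun m _ => mul_le_mul_of_nonneg_right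
            (hanti (by simp) (Ioo_subset_Ico_self (hmem _)) (hmem _).1.le) (hd0 _)
      _ ≤ f 0 * D₁ d N := by
          rw [← Finset.mul_sum]
          exact mul_le_mul_of_nonneg_left (h.sum_one_div_le_D₁ hd N t) h0

theorem apply_le_of_isUlamFixed (h : IsPiecewiseConvex τ a d) (hd : Summable fun m => 1 / d (m + 1))
    (hNn : N ≤ n) (hn : a n + D₁ d N < 1) (hk : 0 < k) (hf : IsUlamFixed (tauN τ a n) k f)
    {x : ℝ} (hx : x ∈ Ico (0 : ℝ) 1) : f x ≤ Dconst a d N / (1 - (a n + D₁ d N)) := by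
  have han : a n < 1 := (le_add_of_nonneg_right (h.D₁_nonneg N)).trans_lt hn
  have hanti := hf.antitoneOn hk (h.tauN_preservesAntitone han)
  have hnn : 0 ≤ᵐ[lam] f := ae_lam_mem_Ico.mono fun x hx => hf.nonneg (Ico_subset_Icc_self hx)
  have hinv : ∀ x ∈ Ioo (0 : ℝ) 1, f x ≤ 1 / x := fun x hx => by
    rw [le_div_iff₀' hx.1, ← hf.integral_eq_one]
    exact mul_le_integral_lam_of_antitoneOn hanti hf.integrable hnn (Ioo_subset_Ico_self hx)
  have hrec := h.apply_zero_le_of_isUlamFixed han hk hf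
  have hsum := h.sum_apply_mul_le hd hanti (hf.nonneg (by simp)) hinv hNn
  calc f x
      ≤ f 0 := hanti (by simp) hx hx.1
    _ ≤ Dconst a d N / (1 - (a n + D₁ d N)) := by
        rw [le_div_iff₀ (sub_pos.2 hn)]
        linarith

theorem exists_abs_apply_le_of_isUlamFixed (h : IsPiecewiseConvex τ a d)
    (hd : Summable fun m => 1 / d (m + 1)) (N : ℕ) :
    ∃ M : ℝ, ∀ n k f, N ≤ n → a n + D₁ d N < 1 → 0 < k → IsUlamFixed (tauN τ a n) k f →
      ∀ x ∈ Ico (0 : ℝ) 1, |f x| ≤ M := by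
  classical
  by_cases hex : ∃ n, N ≤ n ∧ a n + D₁ d N < 1
  · refine ⟨Dconst a d N / (1 - (a (Nat.find hex) + D₁ d N)), ?_⟩
    intro n k f hNn hn hk hf x hx
    have hle : a n ≤ a (Nat.find hex) := h.a_anti.antitone (Nat.find_min' hex ⟨hNn, hn⟩)
    rw [abs_of_nonneg (hf.nonneg (Ico_subset_Icc_self hx))]
    refine (h.apply_le_of_isUlamFixed hd hNn hn hk hf hx).trans ?_
    exact div_le_div_of_nonneg_left (h.Dconst_nonneg N) (sub_pos.2 (Nat.find_spec hex).2)
      (by linarith)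
  · exact ⟨0, fun n k f hNn hn => absurd ⟨n, hNn, hn⟩ hex⟩

end IsPiecewiseConvex

end UniformBound

section AntitoneLimits

variable {ι : Type*} {l : Filter ι} {F : ι → ℝ → ℝ} {α β : ℝ}

theorem intervalIntegral_le_mul_of_antitoneOn {f : ℝ → ℝ} (hαβ : α ≤ β)
    (hf : AntitoneOn f (Icc α β)) : ∫ x in α..β, f x ≤ (β - α) * f α := by
  rw [← smul_eq_mul, ← intervalIntegral.integral_const]
  exact intervalIntegral.integral_mono_on hαβ (uIcc_of_le hαβ ▸ hf).intervalIntegrable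
    intervalIntegrable_const fun x hx => hf (left_mem_Icc.2 hαβ) hx hx.1

theorem mul_le_intervalIntegral_of_antitoneOn {f : ℝ → ℝ} (hαβ : α ≤ β)
    (hf : AntitoneOn f (Icc α β)) : (β - α) * f β ≤ ∫ x in α..β, f x := by
  rw [← smul_eq_mul, ← intervalIntegral.integral_const]
  exact intervalIntegral.integral_mono_on hαβ intervalIntegrable_const
    (uIcc_of_le hαβ ▸ hf).intervalIntegrable fun x hx => hf hx (right_mem_Icc.2 hαβ) hx.2

theorem eventually_const_lt_of_antitoneOn_of_hasDerivAt {G : ℝ → ℝ} {x y b : ℝ}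
    (hF : ∀ i, AntitoneOn (F i) (Ioo α β)) (hx : x ∈ Ioo α β)
    (hw : ∀ u ∈ Ioo α β, ∀ v ∈ Ioo α β, Tendsto (fun i => ∫ t in u..v, F i t) l (𝓝 (G v - G u)))
    (hG : HasDerivAt G y x) (hb : b < y) : ∀ᶠ i in l, b < F i x := by
  have hnear : ∀ᶠ t in 𝓝[>] (0 : ℝ), t < β - x :=
    nhdsWithin_le_nhds (gt_mem_nhds (sub_pos.2 hx.2))
  obtain ⟨t, ⟨hslope, htβ⟩, ht⟩ :=
    (((hG.tendsto_slope_zero_right.eventually_const_lt hb).and hnear).and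
      self_mem_nhdsWithin).exists
  have hxt : x + t ∈ Ioo α β := ⟨by linarith [hx.1], by linarith⟩
  rw [smul_eq_mul, inv_mul_eq_div, lt_div_iff₀' ht] at hslope
  filter_upwards [(hw x hx _ hxt).eventually_const_lt hslope] with i hi
  have hle := intervalIntegral_le_mul_of_antitoneOn (le_add_of_nonneg_right ht.le)
    ((hF i).mono (Icc_subset_Ioo hx.1 hxt.2))
  rw [add_sub_cancel_left] at hle
  exact lt_of_mul_lt_mul_left (hi.trans_le hle) ht.le

theorem eventually_lt_const_of_antitoneOn_of_hasDerivAt {G : ℝ → ℝ} {x y b : ℝ}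
    (hF : ∀ i, AntitoneOn (F i) (Ioo α β)) (hx : x ∈ Ioo α β)
    (hw : ∀ u ∈ Ioo α β, ∀ v ∈ Ioo α β, Tendsto (fun i => ∫ t in u..v, F i t) l (𝓝 (G v - G u)))
    (hG : HasDerivAt G y x) (hb : y < b) : ∀ᶠ i in l, F i x < b := by
  have hnear : ∀ᶠ t in 𝓝[<] (0 : ℝ), α - x < t :=
    nhdsWithin_le_nhds (lt_mem_nhds (sub_neg.2 hx.1))
  obtain ⟨t, ⟨hslope, hαt⟩, ht⟩ :=
    (((hG.tendsto_slope_zero_left.eventually_lt_const hb).and hnear).and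
      self_mem_nhdsWithin).exists
  have hxt : x + t ∈ Ioo α β := ⟨by linarith, by linarith [hx.2]⟩
  rw [smul_eq_mul, inv_mul_eq_div, div_lt_iff_of_neg ht] at hslope
  filter_upwards [(hw _ hxt x hx).eventually_lt_const
    (show G x - G (x + t) < -t * b by linarith)] with i hi
  have hle := mul_le_intervalIntegral_of_antitoneOn (add_le_of_nonpos_right ht.le)
    ((hF i).mono (Icc_subset_Ioo hxt.1 hx.2))
  rw [sub_add_cancel_left] at hle
  exact lt_of_mul_lt_mul_left (hle.trans_lt hi) (neg_nonneg.2 ht.le)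

theorem ae_tendsto_of_antitoneOn {g : ℝ → ℝ} (hF : ∀ i, AntitoneOn (F i) (Ioo α β))
    (hg : IntervalIntegrable g volume α β)
    (hw : ∀ u ∈ Ioo α β, ∀ v ∈ Ioo α β, u ≤ v →
      Tendsto (fun i => ∫ t in u..v, F i t) l (𝓝 (∫ t in u..v, g t))) :
    ∀ᵐ x, x ∈ Ioo α β → Tendsto (fun i => F i x) l (𝓝 (g x)) := by
  filter_upwards [hg.ae_hasDerivAt_integral] with x hderiv hx
  have hαβ : uIcc α β = Icc α β := uIcc_of_le (hx.1.trans hx.2).le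
  rw [hαβ] at hderiv
  have hG := hderiv (Ioo_subset_Icc_self hx) x (Ioo_subset_Icc_self hx)
  have hgi : ∀ u ∈ Ioo α β, IntervalIntegrable g volume x u := fun u hu =>
    hg.mono_set (hαβ ▸ uIcc_subset_Icc (Ioo_subset_Icc_self hx) (Ioo_subset_Icc_self hu))
  have hw' : ∀ u ∈ Ioo α β, ∀ v ∈ Ioo α β, Tendsto (fun i => ∫ t in u..v, F i t) l
      (𝓝 ((∫ t in x..v, g t) - ∫ t in x..u, g t)) := fun u hu v hv => by
    rw [intervalIntegral.integral_interval_sub_left (hgi v hv) (hgi u hu)]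
    obtain huv | hvu := le_total u v
    · exact hw u hu v hv huv
    · simp only [intervalIntegral.integral_symm v u]
      exact (hw v hv u hu hvu).neg
  exact tendsto_order.2 ⟨fun b => eventually_const_lt_of_antitoneOn_of_hasDerivAt hF hx hw' hG,
    fun b => eventually_lt_const_of_antitoneOn_of_hasDerivAt hF hx hw' hG⟩

theorem ae_lam_tendsto_of_antitoneOn {g : ℝ → ℝ} (hF : ∀ i, AntitoneOn (F i) (Ioo 0 1))
    (hg : Integrable g lam)
    (hw : ∀ u v, Tendsto (fun i => ∫ x in Ico u v, F i x ∂lam) l (𝓝 (∫ x in Ico u v, g x ∂lam))) :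
    ∀ᵐ x ∂lam, Tendsto (fun i => F i x) l (𝓝 (g x)) := by
  have hgi : IntervalIntegrable g volume 0 1 := by
    rwa [intervalIntegrable_iff_integrableOn_Icc_of_le zero_le_one]
  rw [lam_eq_restrict_Ioo, ae_restrict_iff' measurableSet_Ioo]
  refine ae_tendsto_of_antitoneOn hF hgi fun u hu v hv huv => ?_
  have hinterval : ∀ f : ℝ → ℝ, ∫ x in Ico u v, f x ∂lam = ∫ x in u..v, f x := fun f => by
    rw [intervalIntegral.integral_of_le huv, integral_Ioc_eq_integral_Ioo,
      lam_restrict_of_subset (Ico_subset_Icc_self.trans (Icc_subset_Icc hu.1.le hv.2.le)),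
      integral_Ico_eq_integral_Ioo]
  simpa only [hinterval] using hw u v

end AntitoneLimits

section InvariantLimit

variable {ι : Type*} {l : Filter ι} {F : ι → ℝ → ℝ} {f : ℝ → ℝ}

theorem tendsto_integral_abs_sub_of_ae_tendsto [l.IsCountablyGenerated] {α : Type*}
    {mα : MeasurableSpace α} {μ : Measure α} [IsFiniteMeasure μ] {F : ι → α → ℝ} {f : α → ℝ} {M : ℝ}
    (hFm : ∀ i, AEStronglyMeasurable (F i) μ) (hf : Integrable f μ)
    (hM : ∀ i, ∀ᵐ x ∂μ, |F i x| ≤ M) (hlim : ∀ᵐ x ∂μ, Tendsto (fun i => F i x) l (𝓝 (f x))) :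
    Tendsto (fun i => ∫ x, |F i x - f x| ∂μ) l (𝓝 0) := by
  rw [← integral_zero α ℝ]
  refine tendsto_integral_filter_of_dominated_convergence (fun x => M + |f x|)
    (.of_forall fun i => ((hFm i).sub hf.aestronglyMeasurable).norm)
    (.of_forall fun i => (hM i).mono fun x hx => ?_) ((integrable_const M).add hf.abs)
    (hlim.mono fun x hx => ?_)
  · rw [Real.norm_eq_abs, abs_abs]
    exact (abs_sub _ _).trans (add_le_add_left hx _)
  · simpa using (hx.sub_const (f x)).abs

theorem tendsto_floor_mul_div {k : ι → ℕ} (hk : Tendsto k l atTop) (hk0 : ∀ i, 0 < k i)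
    {y : ι → ℝ} {z : ℝ} (hy0 : ∀ i, 0 ≤ y i) (hy : Tendsto y l (𝓝 z)) :
    Tendsto (fun i => (⌊y i * k i⌋₊ : ℝ) / k i) l (𝓝 z) := by
  have hk' : ∀ i, (0 : ℝ) < k i := fun i => Nat.cast_pos.2 (hk0 i)
  have hlow : Tendsto (fun i => y i - 1 / k i) l (𝓝 z) := by
    simpa using hy.sub (tendsto_one_div_atTop_nhds_zero_nat.comp hk)
  refine tendsto_of_tendsto_of_tendsto_of_le_of_le hlow hy (fun i => ?_) fun i => ?_
  · rw [le_div_iff₀ (hk' i), sub_mul, one_div_mul_cancel (hk' i).ne']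
    exact (Nat.sub_one_lt_floor _).le
  · exact (div_le_iff₀ (hk' i)).2 (Nat.floor_le (mul_nonneg (hy0 i) (hk' i).le))

theorem tendsto_integral_floor_mul [l.IsCountablyGenerated] {α : Type*} {mα : MeasurableSpace α}
    {μ : Measure α} [IsFiniteMeasure μ] {k : ι → ℕ} {ρ F : ι → α → ℝ} {η f : α → ℝ} {M : ℝ}
    (hk : Tendsto k l atTop) (hk0 : ∀ i, 0 < k i) (hρm : ∀ i, AEMeasurable (ρ i) μ)
    (hρ0 : ∀ᵐ x ∂μ, ∀ i, 0 ≤ ρ i x)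
    (hρ : ∀ᵐ x ∂μ, Tendsto (fun i => ρ i x) l (𝓝 (η x)))
    (hFm : ∀ i, AEStronglyMeasurable (F i) μ) (hM : ∀ i, ∀ᵐ x ∂μ, |F i x| ≤ M)
    (hF : ∀ᵐ x ∂μ, Tendsto (fun i => F i x) l (𝓝 (f x))) (g : ℝ →ᵇ ℝ) :
    Tendsto (fun i => ∫ x, g (⌊ρ i x * k i⌋₊ / k i) * F i x ∂μ) l
      (𝓝 (∫ x, g (η x) * f x ∂μ)) := by
  have hfloor : ∀ i, AEMeasurable (fun x => (⌊ρ i x * k i⌋₊ : ℝ) / k i) μ := fun i =>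
    (measurable_from_nat.comp Nat.measurable_floor).comp_aemeasurable
      ((hρm i).mul_const _) |>.div_const _
  refine tendsto_integral_filter_of_dominated_convergence (fun _ => ‖g‖ * M)
    (.of_forall fun i => ?_) (.of_forall fun i => (hM i).mono fun x hx => ?_)
    (integrable_const _) ?_
  · exact (g.continuous.measurable.comp_aemeasurable (hfloor i)).aestronglyMeasurable.mul (hFm i)
  · rw [norm_mul]
    exact mul_le_mul (g.norm_coe_le_norm _) hx (norm_nonneg _) (norm_nonneg _)
  · filter_upwards [hρ0, hρ, hF] with x hx0 hx hFx
    exact ((g.continuous.tendsto _).comp (tendsto_floor_mul_div hk hk0 hx0 hx)).mul hFx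

theorem integral_comp_mul_eq_of_isUlamFixed [l.NeBot] [l.IsCountablyGenerated] {k : ι → ℕ}
    {σ : ι → ℝ → ℝ} {τ : ℝ → ℝ} {M : ℝ} (hk : Tendsto k l atTop) (hk0 : ∀ i, 0 < k i)
    (hσm : ∀ i, AEMeasurable (σ i) lam)
    (hσ : ∀ᵐ x ∂lam, ∀ i, σ i x ∈ Ico (0 : ℝ) 1)
    (hστ : ∀ᵐ x ∂lam, Tendsto (fun i => σ i x) l (𝓝 (τ x)))
    (hfix : ∀ i, IsUlamFixed (σ i) (k i) (F i)) (hM : ∀ i, ∀ᵐ x ∂lam, |F i x| ≤ M)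
    (hF : ∀ᵐ x ∂lam, Tendsto (fun i => F i x) l (𝓝 (f x))) (g : ℝ →ᵇ ℝ) :
    ∫ x, g (τ x) * f x ∂lam = ∫ x, g x * f x ∂lam := by
  have hFm := fun i => (hfix i).integrable.aestronglyMeasurable
  have hcomp := tendsto_integral_floor_mul hk hk0 hσm
    (hσ.mono fun x hx i => (hx i).1) hστ hFm hM hF g
  have hid := tendsto_integral_floor_mul (ρ := fun _ x => x) hk hk0 (fun _ => aemeasurable_id')
    (ae_lam_mem_Ico.mono fun x hx _ => hx.1) (.of_forall fun _ => tendsto_const_nhds) hFm hM hF g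
  refine tendsto_nhds_unique hcomp (hid.congr fun i => ?_)
  exact ((hfix i).integral_floor_comp (hk0 i) (hσm i) (hσ.mono fun x hx => hx i)
    fun j => g (j / k i)).symm

theorem withDensity_preimage_eq_of_integral_comp_mul_eq {α : Type*} [TopologicalSpace α]
    [HasOuterApproxClosed α] [MeasurableSpace α] [BorelSpace α] {μ : Measure α} {τ : α → α}
    {f : α → ℝ} (hτ : AEMeasurable τ μ) (hf : Integrable f μ) (h0 : 0 ≤ᵐ[μ] f)
    (hinv : ∀ g : α →ᵇ ℝ, ∫ x, g (τ x) * f x ∂μ = ∫ x, g x * f x ∂μ) {A : Set α}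
    (hA : MeasurableSet A) :
    μ.withDensity (fun x => ENNReal.ofReal (f x)) (τ ⁻¹' A) =
      μ.withDensity (fun x => ENNReal.ofReal (f x)) A := by
  set ν := μ.withDensity fun x => ENNReal.ofReal (f x) with hν
  have : IsFiniteMeasure ν := isFiniteMeasure_withDensity_ofReal hf.2
  have hτν : AEMeasurable τ ν := hτ.mono_ac (withDensity_absolutelyContinuous _ _)
  have hdensity : ∀ g : α → ℝ, ∫ x, g x ∂ν = ∫ x, g x * f x ∂μ := fun g => by
    rw [hν, integral_withDensity_eq_integral_toReal_smul₀ hf.aemeasurable.ennreal_ofReal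
      (.of_forall fun _ => ENNReal.ofReal_lt_top)]
    refine integral_congr_ae (h0.mono fun x hx => ?_)
    simp only [ENNReal.toReal_ofReal hx, smul_eq_mul, mul_comm]
  have hmap : ν.map τ = ν := ext_of_forall_integral_eq_of_IsFiniteMeasure fun g => by
    rw [integral_map hτν g.continuous.aestronglyMeasurable, hdensity fun x => g (τ x), hdensity,
      hinv]
  rw [← Measure.map_apply_of_aemeasurable hτν hA, hmap]

theorem tendsto_setIntegral_of_tendsto_integral_mul {μ : Measure ℝ}
    (hw : ∀ φ : ℝ → ℝ, Measurable φ → (∃ K : ℝ, ∀ x ∈ Icc (0 : ℝ) 1, |φ x| ≤ K) →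
      Tendsto (fun i => ∫ x, φ x * F i x ∂μ) l (𝓝 (∫ x, φ x * f x ∂μ)))
    {s : Set ℝ} (hs : MeasurableSet s) :
    Tendsto (fun i => ∫ x in s, F i x ∂μ) l (𝓝 (∫ x in s, f x ∂μ)) := by
  have hind : ∀ h : ℝ → ℝ, ∫ x in s, h x ∂μ = ∫ x, s.indicator 1 x * h x ∂μ := fun h => by
    simp only [← indicator_mul_left, Pi.one_apply, one_mul, integral_indicator hs]
  simp only [hind]
  refine hw _ (measurable_one.indicator hs) ⟨1, fun x _ => ?_⟩
  by_cases hx : x ∈ s <;> simp [hx]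

end InvariantLimit

theorem IsPiecewiseConvex.eventually_tauN_eq {ι : Type*} {l : Filter ι} {τ : ℝ → ℝ} {a d : ℕ → ℝ}
    (h : IsPiecewiseConvex τ a d) {n : ι → ℕ} (hn : Tendsto n l atTop) {x : ℝ} (hx : 0 < x) :
    ∀ᶠ i in l, tauN τ a (n i) x = τ x :=
  ((h.a_lim.comp hn).eventually_lt_const hx).mono fun _ hi => tauN_of_le hi.le

theorem esssup_le_ofReal {f : ℝ → ℝ} {M : ℝ} (hf : ∀ x ∈ Ico (0 : ℝ) 1, f x ≤ M) :
    esssup f ≤ ENNReal.ofReal M :=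
  essSup_le_of_ae_le _ (ae_lam_mem_Ico.mono fun x hx => ENNReal.ofReal_le_ofReal (hf x hx))

theorem stmt16_general (τ : ℝ → ℝ) (a d : ℕ → ℝ) (N : ℕ) (hτ : IsPiecewiseConvex τ a d)
    (hd : Summable fun m => 1 / d (m + 1)) (f : ℕ → ℕ → ℝ → ℝ)
    (hfix : ∀ n k : ℕ, N ≤ n → a n + D₁ d N < 1 → 1 ≤ k →
      IsUlamFixed (tauN τ a n) k (f n k)) :
    (∃ M : ENNReal, M < ⊤ ∧ ∀ n k : ℕ, N ≤ n → a n + D₁ d N < 1 → 1 ≤ k →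
      esssup (f n k) ≤ M) ∧
    ∀ (flim : ℝ → ℝ) (ns ks : ℕ → ℕ), Integrable flim lam →
      (∀ j, N ≤ ns j ∧ a (ns j) + D₁ d N < 1 ∧ 1 ≤ ks j) →
      Tendsto ns atTop atTop → Tendsto ks atTop atTop →
      (∀ u v : ℝ, Tendsto (fun j => ∫ x in Ico u v, f (ns j) (ks j) x ∂lam) atTop
        (𝓝 (∫ x in Ico u v, flim x ∂lam))) →
      Tendsto (fun j => ∫ x, |f (ns j) (ks j) x - flim x| ∂lam) atTop (𝓝 0) ∧
      (∀ᵐ x ∂lam, Tendsto (fun j => f (ns j) (ks j) x) atTop (𝓝 (flim x))) ∧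
      ∀ A : Set ℝ, MeasurableSet A →
        lam.withDensity (fun x => ENNReal.ofReal (flim x)) (τ ⁻¹' A) =
        lam.withDensity (fun x => ENNReal.ofReal (flim x)) A := by
  obtain ⟨M, hM⟩ := hτ.exists_abs_apply_le_of_isUlamFixed hd N
  refine ⟨⟨ENNReal.ofReal M, ENNReal.ofReal_lt_top, fun n k hNn hn hk =>
    esssup_le_ofReal fun x hx =>
      (le_abs_self _).trans (hM n k _ hNn hn hk (hfix n k hNn hn hk) x hx)⟩, ?_⟩
  intro flim ns ks hflim hj hns hks hweak
  have hk0 : ∀ j, 0 < ks j := fun j => (hj j).2.2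
  have hF : ∀ j, IsUlamFixed (tauN τ a (ns j)) (ks j) (f (ns j) (ks j)) := fun j =>
    hfix _ _ (hj j).1 (hj j).2.1 (hj j).2.2
  have hFM : ∀ j, ∀ᵐ x ∂lam, |f (ns j) (ks j) x| ≤ M := fun j =>
    ae_lam_mem_Ico.mono fun x hx => hM _ _ _ (hj j).1 (hj j).2.1 (hk0 j) (hF j) x hx
  have hpres := fun j => hτ.tauN_preservesAntitone
    ((le_add_of_nonneg_right (hτ.D₁_nonneg N)).trans_lt (hj j).2.1)
  have hae := ae_lam_tendsto_of_antitoneOn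
    (fun j => ((hF j).antitoneOn (hk0 j) (hpres j)).mono Ioo_subset_Ico_self) hflim hweak
  have hτlim : ∀ᵐ x ∂lam, Tendsto (fun j => tauN τ a (ns j) x) atTop (𝓝 (τ x)) :=
    ae_lam_mem_Ioo.mono fun x hx =>
      tendsto_nhds_of_eventually_eq (hτ.eventually_tauN_eq hns hx.1)
  refine ⟨tendsto_integral_abs_sub_of_ae_tendsto
    (fun j => (hF j).integrable.aestronglyMeasurable) hflim hFM hae, hae, fun A hA => ?_⟩
  refine withDensity_preimage_eq_of_integral_comp_mul_eq hτ.aemeasurable hflim ?_ ?_ hA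
  · filter_upwards [hae, ae_lam_mem_Ico] with x hx hxI
    exact ge_of_tendsto' hx fun j => (hF j).nonneg (Ico_subset_Icc_self hxI)
  · exact integral_comp_mul_eq_of_isUlamFixed hks hk0 (fun j => (hpres j).aemeasurable)
      (ae_all_iff.2 fun j => (hpres j).ae_mem) hτlim hF hFM hae

/-- The family of normalized Ulam fixed points `f n k` (for `n ≥ N` with `a n + D₁ < 1`
and `k ≥ 1`) is uniformly bounded in `L^∞`. Moreover, if `n j → ∞`, `k j → ∞` and
`f (n j) (k j)` converges weakly in `L¹` to an integrable `flim`, then the convergence also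
holds in `L¹`-norm and `λ`-a.e., and `flim` is a fixed point of the Frobenius–Perron
operator `P_τ`, i.e. the measure `flim·λ` is `τ`-invariant. -/
theorem stmt16 (τ : ℝ → ℝ) (a d : ℕ → ℝ) (N : ℕ)
    (hτ : PCApprox τ a d N)
    (f : ℕ → ℕ → ℝ → ℝ)
    (hfix : ∀ n k : ℕ, N ≤ n → a n + D₁ d N < 1 → 1 ≤ k →
      IsUlamFixed (tauN τ a n) k (f n k)) :
    (∃ M : ENNReal, M < ⊤ ∧ ∀ n k : ℕ, N ≤ n → a n + D₁ d N < 1 → 1 ≤ k →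
      esssup (f n k) ≤ M) ∧
    (∀ (flim : ℝ → ℝ) (ns ks : ℕ → ℕ), MeasureTheory.Integrable flim lam →
      (∀ j, N ≤ ns j ∧ a (ns j) + D₁ d N < 1 ∧ 1 ≤ ks j) →
      Filter.Tendsto ns Filter.atTop Filter.atTop →
      Filter.Tendsto ks Filter.atTop Filter.atTop →
      (∀ φ : ℝ → ℝ, Measurable φ → (∃ K : ℝ, ∀ x ∈ Set.Icc (0:ℝ) 1, |φ x| ≤ K) →
        Filter.Tendsto (fun j => ∫ x, φ x * f (ns j) (ks j) x ∂lam) Filter.atTop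
          (nhds (∫ x, φ x * flim x ∂lam))) →
      Filter.Tendsto (fun j => ∫ x, |f (ns j) (ks j) x - flim x| ∂lam)
        Filter.atTop (nhds 0) ∧
      (∀ᵐ x ∂lam, Filter.Tendsto (fun j => f (ns j) (ks j) x) Filter.atTop
        (nhds (flim x))) ∧
      (∀ A : Set ℝ, MeasurableSet A → A ⊆ Set.Icc (0:ℝ) 1 →
        lam.withDensity (fun x => ENNReal.ofReal (flim x)) (τ ⁻¹' A) =
        lam.withDensity (fun x => ENNReal.ofReal (flim x)) A)) := by
  obtain ⟨hbound, hlim⟩ := stmt16_general τ a d N hτ.isPiecewiseConvex hτ.sum_d f hfix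
  refine ⟨hbound, fun flim ns ks hflim hj hns hks hweak => ?_⟩
  obtain ⟨hnorm, hae, hinv⟩ := hlim flim ns ks hflim hj hns hks fun _ _ =>
    tendsto_setIntegral_of_tendsto_integral_mul hweak measurableSet_Ico
  exact ⟨hnorm, hae, fun A hA _ => hinv A hA⟩
end

section
/- Let τ : [0,1] → [0,1] be defined by τ(x) = 1/((2i+1)/(i(i+1)) − x) − i for x ∈ [1/(i+1), 1/i), i = 1, 2, …, and τ(0) = 0, τ(1) = 1. Then τ admits an absolutely continuous invariant measure: there exists a non-negative function f* ∈ L¹([0,1],λ) with ∫₀¹ f* dλ = 1, λ-a.e. equal to a non-increasing function, such that the probability measure μ = f*·λ is τ-invariant, i.e., μ(τ⁻¹(A)) = μ(A) for every Borel set A ⊆ [0,1]. -/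
open MeasureTheory Set Filter

/-!
The Perron–Frobenius operator `P` of `τ`, written through the inverse branches of `τ`, preserves
the integral and, because the branches are increasing and convex, the cone of non-increasing
functions. On that cone `(P g) 1 ≥ (P g) 0 / 9 ≥ (∫ g) / 9`: the branches fit together end to end,
so the values of `g` sampled by `(P g) 0` are among those sampled by `(P g) 1`, with weights that
decrease by a factor at most `9`. Hence `Q g = P g - (∫ g) / 9` keeps the cone and multiplies
integrals by `8 / 9`, and `∑ n, Q ^ n (1 / 9)` is a fixed point of `P` of integral `1`, with no
compactness argument. Boundedness of the density is a Lasota–Yorke estimate at `0`: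
`(P g) 0 ≤ 2 ∫ g + (∑ i ≥ 2, 1 / i ^ 2) * g 0`, where the coefficient of `g 0` is less than `1`.
-/

open scoped ENNReal Topology

section PerronFrobenius

variable {ι : Type*} {φ φ' : ι → ℝ → ℝ} {g : ℝ → ℝ≥0∞} {s t : Set ℝ}

/-- The Perron–Frobenius (transfer) operator of a map with inverse branches `φ i`, whose
derivatives are `φ' i`. It acts on non-negative densities with values in `ℝ≥0∞`, so that no
summability has to be assumed. -/
noncomputable def perronFrobenius (φ φ' : ι → ℝ → ℝ) (g : ℝ → ℝ≥0∞) (y : ℝ) : ℝ≥0∞ :=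
  ∑' i, ‖φ' i y‖ₑ * g (φ i y)

lemma measurable_perronFrobenius [Countable ι] (hφ : ∀ i, Measurable (φ i))
    (hφ' : ∀ i, Measurable (φ' i)) (hg : Measurable g) : Measurable (perronFrobenius φ φ' g) :=
  Measurable.tsum fun i => (hφ' i).enorm.mul (hg.comp (hφ i))

lemma perronFrobenius_antitoneOn (hφ : ∀ i, MonotoneOn (φ i) s) (hs : ∀ i, MapsTo (φ i) s s)
    (hφ' : ∀ i, AntitoneOn (fun y => ‖φ' i y‖ₑ) s) (hg : AntitoneOn g s) :
    AntitoneOn (perronFrobenius φ φ' g) s := fun _ hx _ hy hxy =>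
  ENNReal.tsum_le_tsum fun i =>
    mul_le_mul' (hφ' i hx hy hxy) (hg (hs i hx) (hs i hy) (hφ i hx hy hxy))

lemma perronFrobenius_tsum {κ : Type*} (g : κ → ℝ → ℝ≥0∞) (y : ℝ) :
    perronFrobenius φ φ' (fun x => ∑' k, g k x) y = ∑' k, perronFrobenius φ φ' (g k) y := by
  simp only [perronFrobenius, ← ENNReal.tsum_mul_left]
  exact ENNReal.tsum_comm

lemma mul_perronFrobenius_le_of_injective {σ : ι → ι} (hσ : σ.Injective) {c : ℝ≥0∞} {x y : ℝ}
    (hφ : ∀ i, φ (σ i) y = φ i x) (hφ' : ∀ i, c * ‖φ' i x‖ₑ ≤ ‖φ' (σ i) y‖ₑ) :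
    c * perronFrobenius φ φ' g x ≤ perronFrobenius φ φ' g y := by
  unfold perronFrobenius
  calc c * ∑' i, ‖φ' i x‖ₑ * g (φ i x)
      = ∑' i, c * ‖φ' i x‖ₑ * g (φ (σ i) y) := by
        simp only [hφ, mul_assoc, ENNReal.tsum_mul_left]
    _ ≤ ∑' i, ‖φ' (σ i) y‖ₑ * g (φ (σ i) y) := by gcongr with i; exact hφ' i
    _ ≤ ∑' i, ‖φ' i y‖ₑ * g (φ i y) :=
        ENNReal.tsum_comp_le_tsum_of_injective hσ fun i => ‖φ' i y‖ₑ * g (φ i y)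

lemma perronFrobenius_le_add {φ φ' : ℕ → ℝ → ℝ} {a : ℝ} (ha : IsLeast s a)
    (hs : ∀ i, MapsTo (φ i) s s) (hg : AntitoneOn g s) :
    perronFrobenius φ φ' g a ≤ ‖φ' 0 a‖ₑ * g (φ 0 a) + (∑' i, ‖φ' (i + 1) a‖ₑ) * g a := by
  unfold perronFrobenius
  rw [tsum_eq_zero_add' ENNReal.summable, ← ENNReal.tsum_mul_right]
  gcongr with i
  have hmem := hs (i + 1) ha.1
  exact hg ha.1 hmem (ha.2 hmem)

/-- The map `τ` has, on `t` and up to null sets, the full inverse branches `φ i` with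
derivatives `φ' i`. -/
structure HasInverseBranches (τ : ℝ → ℝ) (φ φ' : ι → ℝ → ℝ) (t : Set ℝ) : Prop where
  measurable (i : ι) : Measurable (φ i)
  measurable_deriv (i : ι) : Measurable (φ' i)
  hasDerivWithinAt (i : ι) : ∀ y ∈ t, HasDerivWithinAt (φ i) (φ' i y) t y
  leftInvOn (i : ι) : LeftInvOn τ (φ i) t
  pairwise_disjoint : Pairwise (Function.onFun Disjoint fun i => φ i '' t)
  iUnion_image_ae_eq : ⋃ i, φ i '' t =ᵐ[volume] t

namespace HasInverseBranches

variable {τ : ℝ → ℝ} [Countable ι]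

theorem setLIntegral_preimage (h : HasInverseBranches τ φ φ' t) (ht : MeasurableSet t)
    (hg : Measurable g) {A : Set ℝ} (hA : MeasurableSet A) :
    ∫⁻ x in τ ⁻¹' A, g x ∂volume.restrict t =
      ∫⁻ y in A, perronFrobenius φ φ' g y ∂volume.restrict t := by
  have hAt : MeasurableSet (A ∩ t) := hA.inter ht
  have hderiv (i : ι) (y) (hy : y ∈ A ∩ t) : HasDerivWithinAt (φ i) (φ' i y) (A ∩ t) y :=
    (h.hasDerivWithinAt i y hy.2).mono inter_subset_right
  have hinj (i : ι) : InjOn (φ i) (A ∩ t) := (h.leftInvOn i).injOn.mono inter_subset_right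
  have himage (i : ι) : MeasurableSet (φ i '' (A ∩ t)) :=
    hAt.image_of_continuousOn_injOn (fun y hy => (hderiv i y hy).continuousWithinAt) (hinj i)
  have hdisj : Pairwise (Function.onFun Disjoint fun i => φ i '' (A ∩ t)) := fun _ _ hij =>
    (h.pairwise_disjoint hij).mono (image_mono inter_subset_right) (image_mono inter_subset_right)
  have hpre : (τ ⁻¹' A ∩ t : Set ℝ) =ᵐ[volume] ⋃ i, φ i '' (A ∩ t) := by
    simp only [(h.leftInvOn _).image_inter', ← inter_iUnion]
    exact (ae_eq_refl _).inter h.iUnion_image_ae_eq.symm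
  rw [Measure.restrict_restrict' ht, Measure.restrict_restrict' ht, setLIntegral_congr hpre,
    lintegral_iUnion himage hdisj]
  simp only [lintegral_image_eq_lintegral_abs_deriv_mul hAt (hderiv _) (hinj _),
    ← Real.enorm_eq_ofReal_abs]
  exact (lintegral_tsum fun i =>
    ((h.measurable_deriv i).enorm.mul (hg.comp (h.measurable i))).aemeasurable).symm

theorem lintegral_perronFrobenius (h : HasInverseBranches τ φ φ' t) (ht : MeasurableSet t)
    (hg : Measurable g) :
    ∫⁻ y, perronFrobenius φ φ' g y ∂volume.restrict t = ∫⁻ x, g x ∂volume.restrict t := by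
  simpa using (h.setLIntegral_preimage ht hg MeasurableSet.univ).symm

theorem withDensity_preimage (h : HasInverseBranches τ φ φ' t) (ht : MeasurableSet t)
    (hg : Measurable g) (hfix : perronFrobenius φ φ' g =ᵐ[volume.restrict t] g) {A : Set ℝ}
    (hA : MeasurableSet A) :
    (volume.restrict t).withDensity g (τ ⁻¹' A) = (volume.restrict t).withDensity g A := by
  rw [withDensity_apply', withDensity_apply', h.setLIntegral_preimage ht hg hA]
  exact lintegral_congr_ae (ae_restrict_of_ae hfix)

end HasInverseBranches

end PerronFrobenius

lemma tsum_le_div_one_sub_of_succ_le {u b : ℕ → ℝ≥0∞} {q : ℝ≥0∞} (hq : q < 1)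
    (hu : ∀ n, u (n + 1) ≤ b n + q * u n) : ∑' n, u n ≤ (u 0 + ∑' n, b n) / (1 - q) := by
  set D := u 0 + ∑' n, b n with hD
  have hfix : D + q * (D / (1 - q)) = D / (1 - q) := by
    have hq' : 1 - q ≠ 0 := (tsub_pos_of_lt hq).ne'
    have hq_top : 1 - q ≠ ∞ := by finiteness
    calc D + q * (D / (1 - q)) = (1 - q) * (D / (1 - q)) + q * (D / (1 - q)) := by
          rw [ENNReal.mul_div_cancel hq' hq_top]
      _ = D / (1 - q) := by rw [← add_mul, tsub_add_cancel_of_le hq.le, one_mul]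
  refine ENNReal.tsum_le_of_sum_range_le fun N => ?_
  induction N with
  | zero => simp
  | succ N ih =>
    calc ∑ n ∈ Finset.range (N + 1), u n
        = ∑ n ∈ Finset.range N, u (n + 1) + u 0 := Finset.sum_range_succ' u N
      _ ≤ ∑ n ∈ Finset.range N, (b n + q * u n) + u 0 := by gcongr with n; exact hu n
      _ = u 0 + ∑ n ∈ Finset.range N, b n + q * ∑ n ∈ Finset.range N, u n := by
          rw [Finset.sum_add_distrib, Finset.mul_sum]; ring
      _ ≤ D + q * (D / (1 - q)) := by
          rw [hD]
          gcongr
          exact ENNReal.sum_le_tsum _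
      _ = D / (1 - q) := hfix

section Antitone

variable {α : Type*} [Preorder α] [MeasurableSpace α] {μ : Measure α} {s : Set α}
  {g : α → ℝ≥0∞}

lemma lintegral_le_of_antitoneOn [IsProbabilityMeasure μ] (hs : ∀ᵐ x ∂μ, x ∈ s) {a : α}
    (ha : IsLeast s a) (hg : AntitoneOn g s) : ∫⁻ x, g x ∂μ ≤ g a :=
  calc ∫⁻ x, g x ∂μ ≤ ∫⁻ _, g a ∂μ :=
        lintegral_mono_ae (hs.mono fun _ hx => hg ha.1 hx (ha.2 hx))
    _ = g a := by simp

lemma mul_measure_Iic_le_lintegral_of_antitoneOn (hs : ∀ᵐ x ∂μ, x ∈ s)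
    (hg : AntitoneOn g s) (hgm : Measurable g) {y : α} (hy : y ∈ s) :
    g y * μ (Iic y) ≤ ∫⁻ x, g x ∂μ :=
  calc g y * μ (Iic y) ≤ g y * μ {x | g y ≤ g x} := by
        refine mul_le_mul_right ?_ _
        exact measure_mono_ae (hs.mono fun x hx hxy => hg hx hy hxy)
    _ ≤ ∫⁻ x, g x ∂μ := mul_meas_ge_le_lintegral hgm _

end Antitone

section Doeblin

variable {α : Type*} [MeasurableSpace α]

/-- The terms of the Neumann series that solves `P f = f`, `∫ f = 1`: the constant `c` followed by
its images under the iterates of `g ↦ P g - c * ∫ g`. -/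
noncomputable def doeblinResidual (P : (α → ℝ≥0∞) → α → ℝ≥0∞) (μ : Measure α) (c : ℝ≥0∞) :
    ℕ → α → ℝ≥0∞
  | 0 => fun _ => c
  | n + 1 => fun y =>
    P (doeblinResidual P μ c n) y - c * ∫⁻ x, doeblinResidual P μ c n x ∂μ

/-- The invariant density of an operator satisfying a Doeblin minorization with constant `c`. -/
noncomputable def doeblinDensity (P : (α → ℝ≥0∞) → α → ℝ≥0∞) (μ : Measure α) (c : ℝ≥0∞)
    (y : α) : ℝ≥0∞ :=
  ∑' n, doeblinResidual P μ c n y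

/-- A countably additive operator `P` on non-negative functions which preserves the integral and
the cone of functions that are non-increasing on `s`, and satisfies on that cone the Doeblin
minorization `P g ≥ c * ∫ g`. -/
structure IsDoeblinOn [Preorder α] (P : (α → ℝ≥0∞) → α → ℝ≥0∞) (μ : Measure α) (s : Set α)
    (c : ℝ≥0∞) : Prop where
  map_tsum (g : ℕ → α → ℝ≥0∞) (y : α) : P (fun x => ∑' n, g n x) y = ∑' n, P (g n) y
  measurable {g : α → ℝ≥0∞} : Measurable g → Measurable (P g)
  antitoneOn {g : α → ℝ≥0∞} : AntitoneOn g s → AntitoneOn (P g) s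
  lintegral_eq {g : α → ℝ≥0∞} : Measurable g → ∫⁻ x, P g x ∂μ = ∫⁻ x, g x ∂μ
  mul_lintegral_le {g : α → ℝ≥0∞} :
    Measurable g → AntitoneOn g s → ∀ y ∈ s, c * ∫⁻ x, g x ∂μ ≤ P g y

namespace IsDoeblinOn

variable [Preorder α] {P : (α → ℝ≥0∞) → α → ℝ≥0∞} {μ : Measure α} {s : Set α} {c : ℝ≥0∞}

lemma measurable_residual (h : IsDoeblinOn P μ s c) :
    ∀ n, Measurable (doeblinResidual P μ c n)
  | 0 => measurable_const
  | n + 1 => (h.measurable (h.measurable_residual n)).sub measurable_const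

lemma antitoneOn_residual (h : IsDoeblinOn P μ s c) :
    ∀ n, AntitoneOn (doeblinResidual P μ c n) s
  | 0 => antitoneOn_const
  | n + 1 => fun _ hx _ hy hxy =>
    tsub_le_tsub_right (h.antitoneOn (h.antitoneOn_residual n) hx hy hxy) _

lemma residual_succ_add (h : IsDoeblinOn P μ s c) (n : ℕ) {y : α} (hy : y ∈ s) :
    doeblinResidual P μ c (n + 1) y + c * ∫⁻ x, doeblinResidual P μ c n x ∂μ =
      P (doeblinResidual P μ c n) y :=
  tsub_add_cancel_of_le
    (h.mul_lintegral_le (h.measurable_residual n) (h.antitoneOn_residual n) y hy)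

theorem measurable_density (h : IsDoeblinOn P μ s c) : Measurable (doeblinDensity P μ c) :=
  Measurable.tsum h.measurable_residual

theorem antitoneOn_density (h : IsDoeblinOn P μ s c) : AntitoneOn (doeblinDensity P μ c) s :=
  fun _ hx _ hy hxy => ENNReal.tsum_le_tsum fun n => h.antitoneOn_residual n hx hy hxy

variable [IsProbabilityMeasure μ]

lemma le_one (h : IsDoeblinOn P μ s c) (hs : ∀ᵐ x ∂μ, x ∈ s) : c ≤ 1 :=
  calc c = ∫⁻ _, c * ∫⁻ _, 1 ∂μ ∂μ := by simp
    _ ≤ ∫⁻ y, P (fun _ => 1) y ∂μ :=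
        lintegral_mono_ae (hs.mono (h.mul_lintegral_le measurable_const antitoneOn_const))
    _ = 1 := by simp [h.lintegral_eq measurable_const]

lemma lintegral_residual (h : IsDoeblinOn P μ s c) (hs : ∀ᵐ x ∂μ, x ∈ s) (n : ℕ) :
    ∫⁻ x, doeblinResidual P μ c n x ∂μ = (1 - c) ^ n * c := by
  have hc : c ≠ ∞ := ne_top_of_le_ne_top ENNReal.one_ne_top (h.le_one hs)
  induction n with
  | zero => simp [doeblinResidual]
  | succ n ih =>
    set m := ∫⁻ x, doeblinResidual P μ c n x ∂μ with hm
    have hm_top : m ≠ ∞ := by rw [ih]; finiteness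
    have hmeas := h.measurable_residual n
    have hle := h.mul_lintegral_le hmeas (h.antitoneOn_residual n)
    calc ∫⁻ y, P (doeblinResidual P μ c n) y - c * m ∂μ
        = ∫⁻ y, P (doeblinResidual P μ c n) y ∂μ - ∫⁻ _, c * m ∂μ :=
          lintegral_sub measurable_const (by rw [lintegral_const]; finiteness) (hs.mono hle)
      _ = 1 * m - c * m := by simp [h.lintegral_eq hmeas, hm]
      _ = (1 - c) * m := (ENNReal.sub_mul fun _ _ => hm_top).symm
      _ = (1 - c) ^ (n + 1) * c := by rw [ih, pow_succ', mul_assoc]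

lemma tsum_lintegral_residual (h : IsDoeblinOn P μ s c) (hs : ∀ᵐ x ∂μ, x ∈ s) (hc : c ≠ 0) :
    ∑' n, ∫⁻ x, doeblinResidual P μ c n x ∂μ = 1 := by
  have hc1 := h.le_one hs
  simp only [h.lintegral_residual hs, ENNReal.tsum_mul_right, ENNReal.tsum_geometric]
  rw [ENNReal.sub_sub_cancel ENNReal.one_ne_top hc1,
    ENNReal.inv_mul_cancel hc (ne_top_of_le_ne_top ENNReal.one_ne_top hc1)]

theorem lintegral_density (h : IsDoeblinOn P μ s c) (hs : ∀ᵐ x ∂μ, x ∈ s) (hc : c ≠ 0) :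
    ∫⁻ x, doeblinDensity P μ c x ∂μ = 1 := by
  unfold doeblinDensity
  rw [lintegral_tsum fun n => (h.measurable_residual n).aemeasurable,
    h.tsum_lintegral_residual hs hc]

theorem apply_density (h : IsDoeblinOn P μ s c) (hs : ∀ᵐ x ∂μ, x ∈ s) (hc : c ≠ 0) {y : α}
    (hy : y ∈ s) : P (doeblinDensity P μ c) y = doeblinDensity P μ c y :=
  calc P (doeblinDensity P μ c) y = ∑' n, P (doeblinResidual P μ c n) y := h.map_tsum _ y
    _ = ∑' n, (doeblinResidual P μ c (n + 1) y + c * ∫⁻ x, doeblinResidual P μ c n x ∂μ) := by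
        simp only [h.residual_succ_add _ hy]
    _ = ∑' n, doeblinResidual P μ c (n + 1) y + c := by
        rw [ENNReal.tsum_add, ENNReal.tsum_mul_left, h.tsum_lintegral_residual hs hc, mul_one]
    _ = doeblinDensity P μ c y := by
        rw [add_comm]
        exact (tsum_eq_zero_add' (f := fun n => doeblinResidual P μ c n y) ENNReal.summable).symm

theorem density_le (h : IsDoeblinOn P μ s c) (hs : ∀ᵐ x ∂μ, x ∈ s) (hc : c ≠ 0) {a : α}
    {K q : ℝ≥0∞} (hq : q < 1) (hP : ∀ {g : α → ℝ≥0∞}, Measurable g → AntitoneOn g s →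
      P g a ≤ K * ∫⁻ x, g x ∂μ + q * g a) :
    doeblinDensity P μ c a ≤ (c + K) / (1 - q) := by
  have hstep (n : ℕ) : doeblinResidual P μ c (n + 1) a ≤
      K * ∫⁻ x, doeblinResidual P μ c n x ∂μ + q * doeblinResidual P μ c n a :=
    tsub_le_self.trans (hP (h.measurable_residual n) (h.antitoneOn_residual n))
  simpa only [ENNReal.tsum_mul_left, h.tsum_lintegral_residual hs hc, mul_one, doeblinDensity,
    doeblinResidual] using
    tsum_le_div_one_sub_of_succ_le hq hstep

end IsDoeblinOn

end Doeblin

lemma iUnion_Ico_succ_eq_Ioo {α : Type*} [LinearOrder α] [TopologicalSpace α] [OrderTopology α]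
    {u : ℕ → α} {a : α} (hu : StrictAnti u) (ha : Tendsto u atTop (𝓝 a)) :
    ⋃ n, Ico (u (n + 1)) (u n) = Ioo a (u 0) := by
  ext x
  simp only [mem_iUnion, mem_Ico, mem_Ioo]
  constructor
  · rintro ⟨n, hn, hn'⟩
    exact ⟨(hu.antitone.le_of_tendsto ha (n + 2)).trans_lt ((hu n.succ.lt_succ_self).trans_le hn),
      hn'.trans_le (hu.antitone n.zero_le)⟩
  · rintro ⟨hax, hx⟩
    by_contra! hx'
    have hlt (n : ℕ) : x < u n := by
      induction n with
      | zero => exact hx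
      | succ n ih => exact lt_of_not_ge fun hle => (hx' n hle).not_gt ih
    obtain ⟨n, hn⟩ := (ha.eventually_lt_const hax).exists
    exact hn.not_gt (hlt n)

section InvBranch

/-- The inverse of the branch of `τ` on `[1 / (i + 2), 1 / (i + 1))`: branches are indexed from
`0`, so this is branch `i + 1` of the paper. -/
noncomputable def invBranch (i : ℕ) (y : ℝ) : ℝ :=
  1 / ((i : ℝ) + 1) + 1 / ((i : ℝ) + 2) - 1 / (y + i + 1)

/-- The derivative of `invBranch i`. -/
noncomputable def invBranchDeriv (i : ℕ) (y : ℝ) : ℝ := 1 / (y + i + 1) ^ 2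

variable (i : ℕ)

lemma measurable_invBranch : Measurable (invBranch i) := by unfold invBranch; fun_prop

lemma measurable_invBranchDeriv : Measurable (invBranchDeriv i) := by
  unfold invBranchDeriv; fun_prop

lemma invBranch_zero : invBranch i 0 = 1 / (((i + 1 : ℕ) : ℝ) + 1) := by
  simp only [invBranch]; push_cast; ring

lemma invBranch_one : invBranch i 1 = 1 / ((i : ℝ) + 1) := by
  simp only [invBranch]; ring

lemma hasDerivAt_invBranch {y : ℝ} (hy : 0 ≤ y) :
    HasDerivAt (invBranch i) (invBranchDeriv i y) y := by
  have hne : y + i + 1 ≠ 0 := by positivity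
  have hadd : HasDerivAt (fun y : ℝ => y + i + 1) 1 y :=
    ((hasDerivAt_id y).add_const _).add_const _
  have hsub := (hadd.inv hne).const_sub (1 / ((i : ℝ) + 1) + 1 / ((i : ℝ) + 2))
  unfold invBranch invBranchDeriv
  simpa [neg_div] using! hsub

lemma continuousOn_invBranch : ContinuousOn (invBranch i) (Icc 0 1) := fun _ hy =>
  (hasDerivAt_invBranch i hy.1).continuousAt.continuousWithinAt

lemma strictMonoOn_invBranch : StrictMonoOn (invBranch i) (Icc 0 1) := by
  intro x hx y _ hxy
  have hx0 : 0 ≤ x := hx.1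
  unfold invBranch
  gcongr

lemma enorm_invBranchDeriv {y : ℝ} (hy : 0 ≤ y) :
    ‖invBranchDeriv i y‖ₑ = ENNReal.ofReal (1 / (y + i + 1) ^ 2) := by
  rw [invBranchDeriv, Real.enorm_eq_ofReal (by positivity)]

lemma antitoneOn_enorm_invBranchDeriv :
    AntitoneOn (fun y => ‖invBranchDeriv i y‖ₑ) (Icc 0 1) := by
  intro x hx y hy hxy
  have hx0 : 0 ≤ x := hx.1
  simp only [enorm_invBranchDeriv i hx0, enorm_invBranchDeriv i hy.1]
  gcongr

lemma image_invBranch_Ico :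
    invBranch i '' Ico 0 1 = Ico (1 / (((i + 1 : ℕ) : ℝ) + 1)) (1 / ((i : ℝ) + 1)) := by
  rw [← invBranch_zero, ← invBranch_one]
  exact (continuousOn_invBranch i).image_Ico_of_strictMonoOn zero_le_one
    (strictMonoOn_invBranch i)

lemma mapsTo_invBranch : MapsTo (invBranch i) (Icc 0 1) (Icc 0 1) := by
  have hmaps := (strictMonoOn_invBranch i).monotoneOn.mapsTo_Icc
  refine hmaps.mono_right (Icc_subset_Icc ?_ ?_)
  · rw [invBranch_zero]; positivity
  · rw [invBranch_one, div_le_one₀ (by positivity)]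
    exact le_add_of_nonneg_left i.cast_nonneg

lemma strictAnti_one_div_add_one : StrictAnti fun n : ℕ => 1 / ((n : ℝ) + 1) :=
  fun _ _ hmn => Nat.one_div_lt_one_div hmn

lemma pairwise_disjoint_image_invBranch :
    Pairwise (Function.onFun Disjoint fun i => invBranch i '' Ico 0 1) := by
  simp only [image_invBranch_Ico]
  exact strictAnti_one_div_add_one.antitone.pairwise_disjoint_on_Ico_succ

lemma iUnion_image_invBranch : ⋃ i, invBranch i '' Ico 0 1 = Ioo 0 1 := by
  simp only [image_invBranch_Ico]
  simpa using iUnion_Ico_succ_eq_Ioo strictAnti_one_div_add_one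
    (tendsto_one_div_add_atTop_nhds_zero_nat (𝕜 := ℝ))

lemma leftInvOn_invBranch {τ : ℝ → ℝ}
    (hτ : ∀ i : ℕ, 1 ≤ i → ∀ x ∈ Ico (1 / ((i : ℝ) + 1)) (1 / (i : ℝ)),
      τ x = 1 / ((2 * (i : ℝ) + 1) / ((i : ℝ) * ((i : ℝ) + 1)) - x) - (i : ℝ)) :
    LeftInvOn τ (invBranch i) (Ico 0 1) := by
  intro y hy
  have hmem : invBranch i y ∈ Ico (1 / (((i + 1 : ℕ) : ℝ) + 1)) (1 / ((i + 1 : ℕ) : ℝ)) := by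
    have himage := mem_image_of_mem (invBranch i) hy
    rwa [image_invBranch_Ico, ← Nat.cast_add_one i] at himage
  have hden : (2 * ((i + 1 : ℕ) : ℝ) + 1) / (((i + 1 : ℕ) : ℝ) * (((i + 1 : ℕ) : ℝ) + 1)) -
      invBranch i y = 1 / (y + i + 1) := by
    simp only [invBranch]
    push_cast
    field_simp
    ring
  rw [hτ (i + 1) i.succ_pos _ hmem, hden, one_div_one_div]
  push_cast
  ring

theorem hasInverseBranches_invBranch {τ : ℝ → ℝ}
    (hτ : ∀ i : ℕ, 1 ≤ i → ∀ x ∈ Ico (1 / ((i : ℝ) + 1)) (1 / (i : ℝ)),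
      τ x = 1 / ((2 * (i : ℝ) + 1) / ((i : ℝ) * ((i : ℝ) + 1)) - x) - (i : ℝ)) :
    HasInverseBranches τ invBranch invBranchDeriv (Ico 0 1) where
  measurable := measurable_invBranch
  measurable_deriv := measurable_invBranchDeriv
  hasDerivWithinAt i _ hy := (hasDerivAt_invBranch i hy.1).hasDerivWithinAt
  leftInvOn i := leftInvOn_invBranch i hτ
  pairwise_disjoint := pairwise_disjoint_image_invBranch
  iUnion_image_ae_eq := by rw [iUnion_image_invBranch]; exact Ioo_ae_eq_Ico

lemma inv_nine_mul_enorm_invBranchDeriv_zero_le :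
    9⁻¹ * ‖invBranchDeriv i 0‖ₑ ≤ ‖invBranchDeriv (i + 1) 1‖ₑ := by
  have hreal : 1 / (0 + (i : ℝ) + 1) ^ 2 ≤ 9 * (1 / (1 + ((i + 1 : ℕ) : ℝ) + 1) ^ 2) := by
    push_cast
    rw [mul_one_div, div_le_div_iff₀ (by positivity) (by positivity)]
    nlinarith [(Nat.cast_nonneg i : (0 : ℝ) ≤ i)]
  rw [ENNReal.inv_mul_le_iff (by simp) (by simp), enorm_invBranchDeriv i le_rfl,
    enorm_invBranchDeriv (i + 1) zero_le_one]
  simpa [ENNReal.ofReal_mul] using ENNReal.ofReal_le_ofReal hreal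

lemma tsum_enorm_invBranchDeriv_succ_zero_lt_one :
    ∑' i, ‖invBranchDeriv (i + 1) 0‖ₑ < 1 := by
  have hsum := (hasSum_nat_add_iff' 2).2 hasSum_zeta_two
  have hterm (i : ℕ) :
      ‖invBranchDeriv (i + 1) 0‖ₑ = ENNReal.ofReal (1 / ((i + 2 : ℕ) : ℝ) ^ 2) := by
    rw [enorm_invBranchDeriv _ le_rfl]
    push_cast
    ring_nf
  simp only [hterm]
  rw [← ENNReal.ofReal_tsum_of_nonneg (fun _ => by positivity) hsum.summable, hsum.tsum_eq,
    ENNReal.ofReal_lt_one]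
  have hpi : Real.pi ^ 2 < 3.15 ^ 2 := by gcongr; exact Real.pi_lt_d2
  norm_num [Finset.sum_range_succ]
  linarith

/-- The Perron–Frobenius operator of `τ`. -/
noncomputable abbrev branchTransfer : (ℝ → ℝ≥0∞) → ℝ → ℝ≥0∞ :=
  perronFrobenius invBranch invBranchDeriv

lemma lam_eq_restrict_Ico : lam = volume.restrict (Ico 0 1) :=
  Measure.restrict_congr_set Ico_ae_eq_Icc.symm

lemma ae_lam_mem_Icc : ∀ᵐ x ∂lam, x ∈ Icc (0 : ℝ) 1 := ae_restrict_mem measurableSet_Icc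

instance : IsProbabilityMeasure lam := ⟨by simp [lam]⟩

lemma lam_Iic_one_half : lam (Iic (1 / 2)) = 2⁻¹ := by
  have hinter : Iic (1 / 2 : ℝ) ∩ Icc 0 1 = Icc 0 (1 / 2) := by
    rw [← Ici_inter_Iic, inter_left_comm, Iic_inter_Iic, inf_eq_left.2 (by norm_num),
      Ici_inter_Iic]
  rw [lam, Measure.restrict_apply measurableSet_Iic, hinter, Real.volume_Icc, sub_zero, one_div,
    ENNReal.ofReal_inv_of_pos two_pos, ENNReal.ofReal_ofNat]

theorem branchTransfer_zero_le {g : ℝ → ℝ≥0∞} (hg : Measurable g)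
    (hanti : AntitoneOn g (Icc 0 1)) :
    branchTransfer g 0 ≤ 2 * ∫⁻ x, g x ∂lam + (∑' i, ‖invBranchDeriv (i + 1) 0‖ₑ) * g 0 := by
  have hhalf : g (1 / 2) ≤ 2 * ∫⁻ x, g x ∂lam := by
    have hmarkov := mul_measure_Iic_le_lintegral_of_antitoneOn ae_lam_mem_Icc hanti hg
      (y := 1 / 2) (by norm_num)
    rwa [lam_Iic_one_half, mul_comm, ENNReal.inv_mul_le_iff (by simp) (by simp)] at hmarkov
  have hfirst : ‖invBranchDeriv 0 0‖ₑ * g (invBranch 0 0) = g (1 / 2) := by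
    simp [enorm_invBranchDeriv, invBranch_zero, one_add_one_eq_two]
  calc branchTransfer g 0
      ≤ ‖invBranchDeriv 0 0‖ₑ * g (invBranch 0 0) +
          (∑' i, ‖invBranchDeriv (i + 1) 0‖ₑ) * g 0 :=
        perronFrobenius_le_add (isLeast_Icc zero_le_one) mapsTo_invBranch hanti
    _ ≤ 2 * ∫⁻ x, g x ∂lam + (∑' i, ‖invBranchDeriv (i + 1) 0‖ₑ) * g 0 := by
        rw [hfirst]
        gcongr

lemma branchTransfer_antitoneOn {g : ℝ → ℝ≥0∞} (hanti : AntitoneOn g (Icc 0 1)) :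
    AntitoneOn (branchTransfer g) (Icc 0 1) :=
  perronFrobenius_antitoneOn (fun i => (strictMonoOn_invBranch i).monotoneOn) mapsTo_invBranch
    antitoneOn_enorm_invBranchDeriv hanti

theorem isDoeblinOn_branchTransfer {τ : ℝ → ℝ}
    (hτ : HasInverseBranches τ invBranch invBranchDeriv (Ico 0 1)) :
    IsDoeblinOn branchTransfer lam (Icc 0 1) 9⁻¹ := by
  have hint {g : ℝ → ℝ≥0∞} (hg : Measurable g) :
      ∫⁻ x, branchTransfer g x ∂lam = ∫⁻ x, g x ∂lam := by
    rw [lam_eq_restrict_Ico]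
    exact hτ.lintegral_perronFrobenius measurableSet_Ico hg
  refine ⟨perronFrobenius_tsum,
    measurable_perronFrobenius measurable_invBranch measurable_invBranchDeriv,
    branchTransfer_antitoneOn, hint, fun {g} hg hanti y hy => ?_⟩
  have hPanti := branchTransfer_antitoneOn hanti
  calc 9⁻¹ * ∫⁻ x, g x ∂lam = 9⁻¹ * ∫⁻ x, branchTransfer g x ∂lam := by rw [hint hg]
    _ ≤ 9⁻¹ * branchTransfer g 0 := by
        gcongr
        exact lintegral_le_of_antitoneOn ae_lam_mem_Icc (isLeast_Icc zero_le_one) hPanti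
    _ ≤ branchTransfer g 1 :=
        mul_perronFrobenius_le_of_injective (add_left_injective 1)
          (fun i => by rw [invBranch_one, invBranch_zero])
          inv_nine_mul_enorm_invBranchDeriv_zero_le
    _ ≤ branchTransfer g y := hPanti hy (right_mem_Icc.2 zero_le_one) hy.2

lemma doeblinDensity_branchTransfer_ne_top
    (hP : IsDoeblinOn branchTransfer lam (Icc 0 1) 9⁻¹) {x : ℝ} (hx : x ∈ Icc (0 : ℝ) 1) :
    doeblinDensity branchTransfer lam 9⁻¹ x ≠ ∞ := by
  have hq := tsum_enorm_invBranchDeriv_succ_zero_lt_one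
  refine ne_top_of_le_ne_top ?_
    ((hP.antitoneOn_density (left_mem_Icc.2 zero_le_one) hx hx.1).trans
      (hP.density_le ae_lam_mem_Icc (by simp) hq branchTransfer_zero_le))
  exact ENNReal.div_ne_top (by simp) (tsub_pos_of_lt hq).ne'

end InvBranch

/-- The piecewise convex map `τ x = 1/((2i+1)/(i(i+1)) − x) − i` on `[1/(i+1), 1/i)`,
`i = 1, 2, …`, with `τ 0 = 0` and `τ 1 = 1`, admits an absolutely continuous invariant
probability measure `μ = f*·λ` whose density `f*` is non-negative, of integral `1`, and
`λ`-a.e. equal to a non-increasing function. -/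
theorem stmt19 (τ : ℝ → ℝ)
    (hτ0 : τ 0 = 0) (hτ1 : τ 1 = 1)
    (hτ : ∀ i : ℕ, 1 ≤ i → ∀ x ∈ Set.Ico (1 / ((i:ℝ) + 1)) (1 / (i:ℝ)),
      τ x = 1 / ((2 * (i:ℝ) + 1) / ((i:ℝ) * ((i:ℝ) + 1)) - x) - (i:ℝ)) :
    ∃ f : ℝ → ℝ, MeasureTheory.Integrable f lam ∧
      (∀ x, 0 ≤ f x) ∧
      (∫ x, f x ∂lam) = 1 ∧
      (∃ f₀ : ℝ → ℝ, AntitoneOn f₀ (Set.Icc 0 1) ∧ f =ᵐ[lam] f₀) ∧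
      (∀ A : Set ℝ, MeasurableSet A → A ⊆ Set.Icc (0:ℝ) 1 →
        lam.withDensity (fun x => ENNReal.ofReal (f x)) (τ ⁻¹' A) =
        lam.withDensity (fun x => ENNReal.ofReal (f x)) A) := by
  have hbranches := hasInverseBranches_invBranch hτ
  have hP := isDoeblinOn_branchTransfer hbranches
  set f := doeblinDensity branchTransfer lam 9⁻¹
  have hf_meas : Measurable f := hP.measurable_density
  have hf_int : ∫⁻ x, f x ∂lam = 1 := hP.lintegral_density ae_lam_mem_Icc (by simp)
  have hf_fix : branchTransfer f =ᵐ[lam] f :=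
    ae_lam_mem_Icc.mono fun _ => hP.apply_density ae_lam_mem_Icc (by simp)
  have hf_top (x) (hx : x ∈ Icc (0 : ℝ) 1) : f x ≠ ∞ :=
    doeblinDensity_branchTransfer_ne_top hP hx
  have hf_real : (fun x => ENNReal.ofReal (f x).toReal) =ᵐ[lam] f :=
    ae_lam_mem_Icc.mono fun x hx => ENNReal.ofReal_toReal (hf_top x hx)
  refine ⟨fun x => (f x).toReal,
    integrable_toReal_of_lintegral_ne_top hf_meas.aemeasurable (by simp [hf_int]),
    fun _ => ENNReal.toReal_nonneg, ?_, ⟨_, ?_, .rfl⟩, fun A hA _ => ?_⟩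
  · rw [integral_toReal hf_meas.aemeasurable
      (ae_lam_mem_Icc.mono fun x hx => (hf_top x hx).lt_top), hf_int, ENNReal.toReal_one]
  · exact fun x hx y hy hxy => ENNReal.toReal_mono (hf_top x hx) (hP.antitoneOn_density hx hy hxy)
  · rw [withDensity_congr_ae hf_real]
    rw [lam_eq_restrict_Ico] at hf_fix ⊢
    exact hbranches.withDensity_preimage measurableSet_Ico hf_meas hf_fix hA
end
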